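/- arXiv:2504.03637 — 3 statements merged into one kernel-verified Lean document; each statement's English description precedes it below -/
import Mathlib

section
/- Let G = (V, E) be a finite simple graph with vertex set V = {1, …, n}, n ≥ 2. Call a configuration P = (P_1, …, P_n) a chart configuration if every P_i has its (3,4) entry equal to 1, and let U be the set of chart configurations such that every P_i has rank 3 and, for every edge {i,j} of G, the (3,3) entry of 𝓕(P_i,P_j) is nonzero. Define the affine fundamental-matrix map 𝓕_G^aff on U, with values in edge-indexed tuples of complex 3×3 matrices, by (𝓕_G^aff(P))_e = 𝓕(P_i,P_j) / [𝓕(P_i,P_j)]_{3,3} for e = {i,j} ∈ E; this map is differentiable on U, with derivative at P a linear map on tuples (H_1, …, H_n) of 3×4 matrices whose (3,4) entries vanish. Then G is finite solvable if and only if, for a generic configuration P in U, the derivative of 𝓕_G^aff at P has rank 11n − 15. -/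
open Matrix

attribute [local instance] Matrix.normedAddCommGroup Matrix.normedSpace

/-- The fundamental matrix of a camera pair `(P, Q)` of `3 × 4` matrices:
its `(h,k)` entry is `(-1)^(h+k)` times the determinant of the `4 × 4` matrix
obtained by stacking the rows of `P` other than row `k` (in their original order)
on top of the rows of `Q` other than row `h` (in their original order). -/
def fund {K : Type*} [CommRing K] (P Q : Matrix (Fin 3) (Fin 4) K) :
    Matrix (Fin 3) (Fin 3) K :=
  Matrix.of fun h k =>
    (-1 : K) ^ ((h : ℕ) + (k : ℕ)) *
      (Matrix.of fun r c : Fin 4 =>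
          if hr : (r : ℕ) < 2 then P (k.succAbove ⟨(r : ℕ), hr⟩) c
          else Q (h.succAbove ⟨(r : ℕ) - 2, by have := r.isLt; omega⟩) c).det

/-- A configuration on a graph with vertex set `{1, …, n}`: a tuple of `n`
complex `3 × 4` matrices. -/
abbrev Config (n : ℕ) := Fin n → Matrix (Fin 3) (Fin 4) ℂ

/-- Two configurations are projectively equivalent if they differ by a single
invertible `4 × 4` matrix `H` and individual nonzero scalars `λᵢ`. -/
def ProjEquiv {n : ℕ} (Q Q' : Config n) : Prop :=
  ∃ H : Matrix (Fin 4) (Fin 4) ℂ, IsUnit H ∧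
    ∃ lam : Fin n → ℂ, (∀ i, lam i ≠ 0) ∧ ∀ i, Q' i = lam i • (Q i * H)

/-- The set of configurations `Q` of rank-3 cameras whose fundamental matrices
along the edges of `G` agree, up to nonzero scale, with those of `P`. -/
def SolutionSet {n : ℕ} (G : SimpleGraph (Fin n)) (P : Config n) :
    Set (Config n) :=
  {Q | (∀ i, (Q i).rank = 3) ∧
    ∀ i j : Fin n, G.Adj i j →
      ∃ μ : ℂ, μ ≠ 0 ∧ fund (Q i) (Q j) = μ • fund (P i) (P j)}

/-- A graph `G` is finite solvable if, for a generic configuration `P` (i.e. away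
from the zero set of some nonzero polynomial in the `12n` entries), the set of
rank-3 configurations with the same fundamental matrices as `P` (up to scale on
each edge) is a finite union of projective-equivalence classes. -/
def FiniteSolvable {n : ℕ} (G : SimpleGraph (Fin n)) : Prop :=
  ∃ g : MvPolynomial (Fin n × Fin 3 × Fin 4) ℂ, g ≠ 0 ∧
    ∀ P : Config n, MvPolynomial.eval (fun v => P v.1 v.2.1 v.2.2) g ≠ 0 →
      ∃ T : Set (Config n), T.Finite ∧
        SolutionSet G P = {Q | ∃ Q' ∈ T, ProjEquiv Q Q'}

/-- The edges of a graph on `Fin n`, each represented by its unique ordered pair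
`(i, j)` of adjacent vertices with `i < j`. -/
abbrev EdgeIdx {n : ℕ} (G : SimpleGraph (Fin n)) : Type :=
  {p : Fin n × Fin n // G.Adj p.1 p.2 ∧ p.1 < p.2}

/-- The chart domain `U`: chart configurations (every `(3,4)` entry equal to `1`)
consisting of rank-3 cameras, such that on every edge the `(3,3)` entry of the
fundamental matrix is nonzero. -/
def chartDomain {n : ℕ} (G : SimpleGraph (Fin n)) : Set (Config n) :=
  {P | (∀ i, P i 2 3 = 1) ∧ (∀ i, (P i).rank = 3) ∧
    ∀ i j : Fin n, G.Adj i j → fund (P i) (P j) 2 2 ≠ 0}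

/-- The affine fundamental-matrix map `𝓕_G^aff`: on each edge, the fundamental
matrix divided by its `(3,3)` entry. -/
noncomputable def Faff {n : ℕ} (G : SimpleGraph (Fin n)) (P : Config n) :
    EdgeIdx G → Matrix (Fin 3) (Fin 3) ℂ := fun e =>
  (fund (P e.1.1) (P e.1.2) 2 2)⁻¹ • fund (P e.1.1) (P e.1.2)

/-- The tuples of `3 × 4` matrices whose `(3,4)` entries vanish: the directions
tangent to the chart configurations. -/
noncomputable def chartDirections (n : ℕ) : Submodule ℂ (Config n) where
  carrier := {H | ∀ i, H i 2 3 = 0}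
  add_mem' := by
    intro a b ha hb
    intro i
    simp [ha i, hb i]
  zero_mem' := by intro i; simp
  smul_mem' := by
    intro c a ha
    intro i
    simp [ha i]

/-- The index set of the free entries of a chart configuration: all matrix
entries except the fixed `(3,4)` entry of each camera. -/
abbrev FreeIdx (n : ℕ) : Type :=
  Fin n × {rc : Fin 3 × Fin 4 // rc ≠ ((2 : Fin 3), (3 : Fin 4))}

/-!
The solutions of a configuration are the zeros of a polynomial system in the camera entries and one
unknown scale per edge. A pair of cameras with nonzero fundamental matrix is determined by that
matrix up to a projective transformation, so pinning the cameras at the two ends of one edge,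
together with one entry of every other camera, removes the gauge freedom `GL₄ × (ℂˣ)ⁿ`. At a
nondegenerate configuration the Jacobian of the pinned system is injective exactly when the
configuration is infinitesimally rigid, i.e. its infinitesimal solutions are only the
`(n + 15)`-dimensional space of gauge directions.

If the Jacobian is injective at one point, the coordinates are algebraic over the system, so generic
fibres are finite. If it is nowhere injective, the constant rank theorem at a point where its rank
is maximal gives an infinite fibre, hence infinitely many projective classes of solutions. So finite
solvability is generic infinitesimal rigidity. Finally, the kernel of the derivative of `Faff G` on
all `12n` entries is the space of infinitesimal solutions, and rescaling cameras moves any direction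
into the chart, so rigidity means rank `12n - (n + 15) = 11n - 15`. Without edges, the rank is `0`
and all rank-3 configurations are solutions.
-/

section PolynomialMaps

open MvPolynomial Filter Topology

section Generic

variable {σ τ K : Type*} [Field K]

/-- The filter of Zariski-generic points of the affine space `σ → K`: a set is generic if it
contains the complement of a hypersurface. -/
def generic (σ K : Type*) [Field K] : Filter (σ → K) where
  sets := {s | ∃ g : MvPolynomial σ K, g ≠ 0 ∧ ∀ x, eval x g ≠ 0 → x ∈ s}
  univ_sets := ⟨1, one_ne_zero, fun _ _ => trivial⟩
  sets_of_superset := fun ⟨g, hg, h⟩ hst => ⟨g, hg, fun x hx => hst (h x hx)⟩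
  inter_sets := fun ⟨g, hg, h⟩ ⟨g', hg', h'⟩ => ⟨g * g', mul_ne_zero hg hg', fun x hx => by
    rw [map_mul] at hx
    exact ⟨h x (left_ne_zero_of_mul hx), h' x (right_ne_zero_of_mul hx)⟩⟩

theorem eventually_generic {p : (σ → K) → Prop} :
    (∀ᶠ x in generic σ K, p x) ↔ ∃ g : MvPolynomial σ K, g ≠ 0 ∧ ∀ x, eval x g ≠ 0 → p x :=
  Iff.rfl

instance [Infinite K] : (generic σ K).NeBot := by
  refine neBot_iff.2 fun h => ?_
  obtain ⟨g, hg, hx⟩ := eventually_generic.1 (eventually_false_iff_eq_bot.2 h)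
  exact hg (MvPolynomial.funext fun x => by simpa using hx x)

theorem eventually_generic_of_eval_ne_zero {g : MvPolynomial σ K} {x₀ : σ → K}
    (h : eval x₀ g ≠ 0) : ∀ᶠ x in generic σ K, eval x g ≠ 0 :=
  ⟨g, fun hg => h (by rw [hg, map_zero]), fun _ => id⟩

theorem tendsto_comp_generic {f : σ → τ} (hf : f.Injective) :
    Tendsto (fun x : τ → K => x ∘ f) (generic τ K) (generic σ K) := by
  rintro s ⟨g, hg, hs⟩
  refine ⟨rename f g, (map_ne_zero_iff _ (rename_injective f hf)).2 hg, fun x hx => hs _ ?_⟩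
  rwa [eval_rename] at hx

end Generic

section PolyMap

variable {ι κ ν : Type*} {K : Type*} [CommRing K]

/-- The map between affine spaces whose coordinates are the polynomials `Φ i`. -/
noncomputable def polyMap (Φ : ι → MvPolynomial ν K) (x : ν → K) : ι → K :=
  fun i => eval x (Φ i)

theorem polyMap_X (x : ν → K) : polyMap X x = x :=
  funext fun _ => eval_X _

theorem eval_polyMap (Φ : ι → MvPolynomial ν K) (x : ν → K) (g : MvPolynomial ι K) :
    eval (polyMap Φ x) g = eval x (bind₁ Φ g) := by
  rw [eval, eval, eval₂Hom_bind₁]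
  rfl

/-- The Jacobian matrix of `polyMap Φ` at `x`. -/
noncomputable def jacobian (Φ : ι → MvPolynomial ν K) (x : ν → K) : Matrix ι ν K :=
  of fun i j => eval x (pderiv j (Φ i))

/-- The polynomials defining the composite of `polyMap Φ` with the linear map `L`. -/
noncomputable def linearComp [Fintype ι] (L : Matrix κ ι K) (Φ : ι → MvPolynomial ν K) :
    κ → MvPolynomial ν K :=
  L.map C *ᵥ Φ

theorem polyMap_linearComp [Fintype ι] (L : Matrix κ ι K) (Φ : ι → MvPolynomial ν K) (x : ν → K) :
    polyMap (linearComp L Φ) x = L *ᵥ polyMap Φ x := by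
  ext i
  simp [polyMap, linearComp, mulVec, dotProduct]

theorem jacobian_linearComp [Fintype ι] (L : Matrix κ ι K) (Φ : ι → MvPolynomial ν K) (x : ν → K) :
    jacobian (linearComp L Φ) x = L * jacobian Φ x := by
  ext i j
  simp [jacobian, linearComp, mulVec, dotProduct, mul_apply]

theorem eval_det_pderiv [Fintype ν] [DecidableEq ν] (Ψ : ν → MvPolynomial ν K) (x : ν → K) :
    eval x (of fun i j => pderiv j (Ψ i)).det = (jacobian Ψ x).det := by
  rw [RingHom.map_det]
  rfl

end PolyMap

section GenericPolyMap

variable {ι ν τ K : Type*} [Field K]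

theorem eventually_generic_eval_polyMap_ne_zero (θ : ν → MvPolynomial τ K) {g : MvPolynomial ν K}
    {y₀ : τ → K} (h : eval (polyMap θ y₀) g ≠ 0) :
    ∀ᶠ y in generic τ K, eval (polyMap θ y) g ≠ 0 := by
  simp only [eval_polyMap] at h ⊢
  exact eventually_generic_of_eval_ne_zero h

theorem exists_eventually_generic_sumElim [Infinite K] {p : (ν ⊕ τ → K) → Prop}
    (h : ∀ᶠ x in generic (ν ⊕ τ) K, p x) : ∃ t : τ → K, ∀ᶠ y in generic ν K, p (Sum.elim y t) := by
  obtain ⟨g, hg, hp⟩ := eventually_generic.1 h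
  obtain ⟨x, hx⟩ := (eventually_generic.2 ⟨g, hg, fun _ => id⟩).exists
  have hθ (y : ν → K) :
      polyMap (Sum.elim X fun j => C (x (Sum.inr j))) y = Sum.elim y (x ∘ Sum.inr) := by
    ext (j | j) <;> simp [polyMap]
  refine ⟨x ∘ Sum.inr, (eventually_generic_eval_polyMap_ne_zero
    (Sum.elim X fun j => C (x (Sum.inr j))) (y₀ := x ∘ Sum.inl) (g := g) ?_).mono fun y hy => ?_⟩
  · rwa [hθ, Sum.elim_comp_inl_inr]
  · rw [hθ] at hy
    exact hp _ hy

theorem exists_mul_eq_one_of_mulVec_injective [Fintype ι] [Fintype ν] [DecidableEq ν]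
    {A : Matrix ι ν K} (hA : Function.Injective A.mulVec) : ∃ L : Matrix ν ι K, L * A = 1 := by
  classical
  obtain ⟨L, hL⟩ := A.mulVecLin.exists_leftInverse_of_injective (LinearMap.ker_eq_bot.2 hA)
  exact ⟨LinearMap.toMatrix' L, by
    rw [← LinearMap.toMatrix'_toLin' A, ← LinearMap.toMatrix'_comp]
    exact (congrArg LinearMap.toMatrix' hL).trans LinearMap.toMatrix'_id⟩

theorem mulVec_injective_of_det_mul_ne_zero [Fintype ι] [Fintype ν] [DecidableEq ν]
    {A : Matrix ι ν K} {L : Matrix ν ι K} (h : (L * A).det ≠ 0) : Function.Injective A.mulVec := by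
  have hLA : Function.Injective (L * A).mulVec :=
    mulVec_injective_iff_isUnit.2 ((isUnit_iff_isUnit_det _).2 h.isUnit)
  exact Function.Injective.of_comp (f := L.mulVec) (by simpa [Function.comp_def] using hLA)

theorem eventually_generic_injective_jacobian [Finite ι] [Fintype ν] (Φ : ι → MvPolynomial ν K)
    (θ : ν → MvPolynomial τ K) {y₀ : τ → K}
    (h : Function.Injective (jacobian Φ (polyMap θ y₀)).mulVec) :
    ∀ᶠ y in generic τ K, Function.Injective (jacobian Φ (polyMap θ y)).mulVec := by
  classical
  have := Fintype.ofFinite ι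
  obtain ⟨L, hL⟩ := exists_mul_eq_one_of_mulVec_injective h
  refine (eventually_generic_eval_polyMap_ne_zero θ
    (g := (of fun i j => pderiv j (linearComp L Φ i)).det) (y₀ := y₀) ?_).mono fun y hy => ?_
  · rw [eval_det_pderiv, jacobian_linearComp, hL, det_one]
    exact one_ne_zero
  · rw [eval_det_pderiv, jacobian_linearComp] at hy
    exact mulVec_injective_of_det_mul_ne_zero hy

end GenericPolyMap

section Derivative

variable {ι ν 𝕜 : Type*} [RCLike 𝕜]

theorem eq_zero_of_eventually_eval_eq_zero [Finite ν] {p : MvPolynomial ν 𝕜} {y : ν → 𝕜}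
    (h : ∀ᶠ z in 𝓝 y, eval z p = 0) : p = 0 := by
  have := Fintype.ofFinite ν
  obtain ⟨ε, hε, hball⟩ := Metric.eventually_nhds_iff_ball.1 h
  refine MvPolynomial.funext_set (fun i => Metric.ball (y i) ε)
    (fun i => infinite_of_mem_nhds (y i) (Metric.ball_mem_nhds _ hε)) fun x hx => ?_
  rw [map_zero]
  exact hball x (by rwa [ball_pi _ hε])

variable [Fintype ν]

theorem contDiff_eval (p : MvPolynomial ν 𝕜) {m : WithTop ℕ∞} :
    ContDiff 𝕜 m fun x : ν → 𝕜 => eval x p := by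
  induction p using MvPolynomial.induction_on with
  | C a => simpa using contDiff_const
  | add p q hp hq => simpa using hp.add hq
  | mul_X p i hp => simpa using hp.mul (contDiff_apply 𝕜 𝕜 i)

theorem contDiff_polyMap [Fintype ι] (Φ : ι → MvPolynomial ν 𝕜) {m : WithTop ℕ∞} :
    ContDiff 𝕜 m (polyMap Φ) :=
  contDiff_pi.2 fun i => contDiff_eval (Φ i)

theorem fderiv_eval_apply (p : MvPolynomial ν 𝕜) (x v : ν → 𝕜) :
    fderiv 𝕜 (fun x : ν → 𝕜 => eval x p) x v = ∑ j, eval x (pderiv j p) * v j := by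
  classical
  have hdiff (p : MvPolynomial ν 𝕜) : DifferentiableAt 𝕜 (fun x : ν → 𝕜 => eval x p) x :=
    (contDiff_eval p (m := 1)).differentiable one_ne_zero x
  induction p using MvPolynomial.induction_on with
  | C a => simp
  | add p q hp hq =>
    simp only [map_add]
    rw [fderiv_fun_add (hdiff p) (hdiff q)]
    simp [hp, hq, add_mul, Finset.sum_add_distrib]
  | mul_X p i hp =>
    have hX : HasFDerivAt (fun x : ν → 𝕜 => x i) (ContinuousLinearMap.proj (R := 𝕜) i) x :=
      hasFDerivAt_apply i x
    simp only [map_mul, eval_X]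
    rw [fderiv_fun_mul (hdiff p) hX.differentiableAt, hX.fderiv]
    simp [hp, pderiv_X, Pi.single_apply, apply_ite (eval x), add_mul, Finset.sum_add_distrib,
      Finset.mul_sum, mul_assoc]

theorem coe_fderiv_polyMap [Finite ι] (Φ : ι → MvPolynomial ν 𝕜) (x : ν → 𝕜) :
    ⇑(fderiv 𝕜 (polyMap Φ) x) = (jacobian Φ x).mulVec := by
  have := Fintype.ofFinite ι
  ext v i
  have hdiff (i : ι) : DifferentiableAt 𝕜 (fun x : ν → 𝕜 => eval x (Φ i)) x :=
    (contDiff_eval (Φ i) (m := 1)).differentiable one_ne_zero x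
  change fderiv 𝕜 (fun x i => eval x (Φ i)) x v i = _
  rw [fderiv_pi hdiff]
  exact fderiv_eval_apply _ _ _

theorem jacobian_mulVec_apply_of_hasDerivAt (Φ : ι → MvPolynomial ν 𝕜) {x v : ν → 𝕜} {i : ι}
    {d : 𝕜} (h : HasDerivAt (fun t : 𝕜 => eval (x + t • v) (Φ i)) d 0) :
    (jacobian Φ x *ᵥ v) i = d := by
  have hfderiv := ((contDiff_eval (Φ i) (m := 1)).differentiable one_ne_zero x).hasFDerivAt
  have hline : HasLineDerivAt 𝕜 (fun x : ν → 𝕜 => eval x (Φ i)) d x v := h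
  rw [← hline.lineDeriv, (hfderiv.hasLineDerivAt v).lineDeriv, fderiv_eval_apply]
  rfl

theorem algebraicIndependent_of_injective_jacobian {Ψ : ν → MvPolynomial ν 𝕜} {x₀ : ν → 𝕜}
    (h : Function.Injective (jacobian Ψ x₀).mulVec) : AlgebraicIndependent 𝕜 Ψ := by
  refine algebraicIndependent_iff.2 fun p hp => ?_
  have hstrict := (contDiff_polyMap Ψ (m := 1)).contDiffAt.hasStrictFDerivAt (x := x₀) one_ne_zero
  have hinj : Function.Injective (fderiv 𝕜 (polyMap Ψ) x₀) := by
    rwa [coe_fderiv_polyMap]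
  have hmap := hstrict.map_nhds_eq_of_surj (LinearMap.range_eq_top.2
    (LinearMap.injective_iff_surjective.1 hinj))
  refine eq_zero_of_eventually_eval_eq_zero (y := polyMap Ψ x₀) ?_
  rw [← hmap, eventually_map]
  refine Eventually.of_forall fun x => ?_
  rw [eval_polyMap]
  exact (congrArg (eval x) hp).trans (map_zero _)

end Derivative

section FiniteFibres

variable {ι ν K : Type*} [Field K]

theorem eval_eq_of_mem_adjoin_range {Φ : ι → MvPolynomial ν K} {x y : ν → K}
    (hxy : polyMap Φ y = polyMap Φ x) {a : MvPolynomial ν K}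
    (ha : a ∈ Algebra.adjoin K (Set.range Φ)) : eval y a = eval x a := by
  rw [Algebra.adjoin_range_eq_range_aeval] at ha
  obtain ⟨p, rfl⟩ := ha
  change eval y (bind₁ Φ p) = eval x (bind₁ Φ p)
  rw [← eval_polyMap, ← eval_polyMap, hxy]

theorem eventually_generic_finite_coord {Φ : ι → MvPolynomial ν K} {j : ν}
    (hj : IsAlgebraic (Algebra.adjoin K (Set.range Φ)) (X j : MvPolynomial ν K)) :
    ∀ᶠ x in generic ν K, {z | ∃ y, polyMap Φ y = polyMap Φ x ∧ y j = z}.Finite := by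
  obtain ⟨q, hq0, hq⟩ := hj
  refine eventually_generic.2 ⟨(q.leadingCoeff : MvPolynomial ν K), fun h =>
    hq0 (Polynomial.leadingCoeff_eq_zero.1 (Subtype.ext h)), fun x hx => ?_⟩
  let ev (y : ν → K) : Algebra.adjoin K (Set.range Φ) →+* K :=
    (eval y).comp (Algebra.adjoin K (Set.range Φ)).val.toRingHom
  have hqx : q.map (ev x) ≠ 0 := fun h => hx <| by
    have hcoeff := congrArg (Polynomial.coeff · q.natDegree) h
    rwa [Polynomial.coeff_map, Polynomial.coeff_natDegree, Polynomial.coeff_zero] at hcoeff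
  refine (Polynomial.finite_setOfPred_isRoot hqx).subset ?_
  rintro _ ⟨y, hy, rfl⟩
  have hev : ev x = ev y := RingHom.ext fun a => (eval_eq_of_mem_adjoin_range hy a.2).symm
  have hroot := congrArg (eval y) hq
  rw [map_zero, Polynomial.aeval_def, Polynomial.hom_eval₂, eval_X] at hroot
  change Polynomial.eval (y j) (q.map (ev x)) = 0
  rwa [hev, Polynomial.eval_map]

theorem eventually_generic_finite_fibre_of_algebraicIndependent [Finite ν]
    {Ψ : ν → MvPolynomial ν K} (hΨ : AlgebraicIndependent K Ψ) :
    ∀ᶠ x in generic ν K, {y | polyMap Ψ y = polyMap Ψ x}.Finite := by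
  have hbasis : IsTranscendenceBasis K Ψ := hΨ.isTranscendenceBasis_of_lift_trdeg_le_of_finite
    (by rw [MvPolynomial.trdeg_of_isDomain]; simp)
  have hcoord := eventually_all.2 fun j =>
    eventually_generic_finite_coord (hbasis.isAlgebraic.isAlgebraic (X j))
  refine hcoord.mono fun x hx => (Set.Finite.pi' hx).subset fun y hy j => ⟨y, hy, rfl⟩

theorem eventually_generic_finite_fibre {𝕜 : Type*} [RCLike 𝕜] [Finite ι] [Fintype ν]
    {Φ : ι → MvPolynomial ν 𝕜} {x₀ : ν → 𝕜}
    (h : Function.Injective (jacobian Φ x₀).mulVec) :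
    ∀ᶠ x in generic ν 𝕜, {y | polyMap Φ y = polyMap Φ x}.Finite := by
  classical
  have := Fintype.ofFinite ι
  obtain ⟨L, hL⟩ := exists_mul_eq_one_of_mulVec_injective h
  have hind : AlgebraicIndependent 𝕜 (linearComp L Φ) :=
    algebraicIndependent_of_injective_jacobian (x₀ := x₀) <| by
      rw [jacobian_linearComp, hL]
      exact mulVec_injective_iff_isUnit.2 isUnit_one
  refine (eventually_generic_finite_fibre_of_algebraicIndependent hind).mono fun x hx =>
    hx.subset fun y hy => ?_
  rw [Set.mem_ofPred_eq] at hy ⊢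
  rw [polyMap_linearComp, polyMap_linearComp, hy]

end FiniteFibres

section InfiniteFibres

variable {𝕜 E F R : Type*} [RCLike 𝕜]
  [NormedAddCommGroup E] [NormedSpace 𝕜 E] [NormedAddCommGroup F] [NormedSpace 𝕜 F]
  [NormedAddCommGroup R] [NormedSpace 𝕜 R]

theorem exists_isMaxOn_of_bddAbove_nat {α : Type*} {f : α → ℕ} {s : Set α} (hs : s.Nonempty)
    (hf : BddAbove (f '' s)) : ∃ x ∈ s, IsMaxOn f s x := by
  obtain ⟨x, hx, hmax⟩ := Nat.sSup_mem (hs.image f) hf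
  exact ⟨x, hx, fun y hy => (le_csSup hf (Set.mem_image_of_mem f hy)).trans_eq hmax.symm⟩

theorem ker_comp_eq_of_surjective [FiniteDimensional 𝕜 E] [FiniteDimensional 𝕜 R]
    {B : E →ₗ[𝕜] F} {π : F →ₗ[𝕜] R} (hπ : Function.Surjective (π ∘ₗ B))
    (hB : Module.finrank 𝕜 B.range ≤ Module.finrank 𝕜 R) : (π ∘ₗ B).ker = B.ker := by
  refine (Submodule.eq_of_le_of_finrank_le (LinearMap.ker_le_ker_comp B π) ?_).symm
  have hcomp := (π ∘ₗ B).finrank_range_add_finrank_ker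
  rw [LinearMap.range_eq_top.2 hπ, finrank_top] at hcomp
  have := B.finrank_range_add_finrank_ker
  omega

theorem eventually_surjective_nhds [FiniteDimensional 𝕜 R] {A : E →L[𝕜] R}
    (hA : Function.Surjective A) : ∀ᶠ B : E →L[𝕜] R in 𝓝 A, Function.Surjective B := by
  have := FiniteDimensional.complete 𝕜 R
  obtain ⟨s, hs⟩ := A.toLinearMap.exists_rightInverse_of_surjective (LinearMap.range_eq_top.2 hA)
  let s' : R →L[𝕜] E := LinearMap.toContinuousLinearMap s
  have hAs : A.comp s' = (ContinuousLinearEquiv.refl 𝕜 R : R →L[𝕜] R) :=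
    ContinuousLinearMap.ext (LinearMap.congr_fun hs)
  have hcomp : Tendsto (fun B : E →L[𝕜] R => B.comp s') (𝓝 A) (𝓝 (A.comp s')) :=
    ((ContinuousLinearMap.compL 𝕜 R E R).flip s').continuous.tendsto A
  rw [hAs] at hcomp
  filter_upwards [hcomp.eventually (ContinuousLinearEquiv.nhds _)] with B ⟨e, he⟩
  exact Function.Surjective.of_comp (g := s') <| by
    rw [← ContinuousLinearMap.coe_comp, ← he]
    exact e.surjective

section ImplicitFunction

variable {G : Type*} [NormedAddCommGroup G] [NormedSpace 𝕜 G]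
  [CompleteSpace E] [CompleteSpace R] [CompleteSpace G] (D : ImplicitFunctionData 𝕜 E R G)

theorem tendsto_implicitFunction :
    Tendsto (D.implicitFunction (D.leftFun D.pt)) (𝓝 (D.rightFun D.pt)) (𝓝 D.pt) := by
  have := D.differentiableAt_implicitFunction.continuousAt.tendsto
  rwa [D.implicitFunction_apply_image.self_of_nhds] at this

theorem eventually_differentiableAt_implicitFunction (hl : ContDiffAt 𝕜 1 D.leftFun D.pt)
    (hr : ContDiffAt 𝕜 1 D.rightFun D.pt) : ∀ᶠ k in 𝓝 (D.rightFun D.pt),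
      DifferentiableAt 𝕜 (D.implicitFunction (D.leftFun D.pt)) k ∧
      D.prodFun (D.implicitFunction (D.leftFun D.pt) k) = (D.leftFun D.pt, k) := by
  have hslice : Differentiable 𝕜 fun k : G => (D.leftFun D.pt, k) := by fun_prop
  have hslice₀ := hslice.continuous.tendsto (D.rightFun D.pt)
  have hsmooth := (D.contDiffAt_implicitFunction hl hr one_ne_zero).eventually (by simp)
  filter_upwards [hslice₀.eventually D.prodFun_implicitFunction, hslice₀.eventually hsmooth]
    with k hk hdiff
  exact ⟨(hdiff.differentiableAt one_ne_zero).comp k (hslice k), hk⟩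

/-- The fibre contains the level set of `D.leftFun` through `D.pt`, parametrized by the implicit
function: `f` has zero derivative along it. -/
theorem infinite_fibre_of_ker_fderiv_le [Nontrivial G] (hl : ContDiff 𝕜 1 D.leftFun)
    (hr : ContDiffAt 𝕜 1 D.rightFun D.pt) {f : E → F} (hf : Differentiable 𝕜 f) {p : E → Prop}
    (h : ∀ᶠ y in 𝓝 D.pt, p y ∧ (fderiv 𝕜 D.leftFun y).ker ≤ (fderiv 𝕜 f y).ker) :
    {y | p y ∧ f y = f D.pt}.Infinite := by
  let _ : NormedSpace ℝ G := NormedSpace.restrictScalars ℝ 𝕜 G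
  let φ := D.implicitFunction (D.leftFun D.pt)
  obtain ⟨ε, hε, hball⟩ := Metric.eventually_nhds_iff_ball.1
    ((eventually_differentiableAt_implicitFunction D hl.contDiffAt hr).and
      ((tendsto_implicitFunction D).eventually h))
  set B := Metric.ball (D.rightFun D.pt) ε
  have hφ : ∀ k ∈ B, HasFDerivAt φ (fderiv 𝕜 φ k) k := fun k hk => (hball k hk).1.1.hasFDerivAt
  have hzero : ∀ k ∈ B, HasFDerivAt (f ∘ φ) (0 : G →L[𝕜] F) k := fun k hk => by
    have hlφ : HasFDerivAt (D.leftFun ∘ φ) (0 : G →L[𝕜] R) k :=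
      (hasFDerivAt_const (D.leftFun D.pt) k).congr_of_eventuallyEq <| by
        filter_upwards [Metric.isOpen_ball.mem_nhds hk] with k' hk'
        exact congrArg Prod.fst (hball k' hk').1.2
    have hker := ((hl.differentiable one_ne_zero _).hasFDerivAt.comp k (hφ k hk)).unique hlφ
    convert! (hf _).hasFDerivAt.comp k (hφ k hk)
    ext v
    exact ((hball k hk).2.2 (DFunLike.congr_fun hker v)).symm
  have hconst : ∀ k ∈ B, f (φ k) = f D.pt := fun k hk => by
    rw [← D.implicitFunction_apply_image.self_of_nhds]
    exact Metric.isOpen_ball.is_const_of_fderiv_eq_zero (convex_ball _ ε).isPreconnected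
      (fun k hk => (hzero k hk).differentiableAt.differentiableWithinAt)
      (fun k hk => (hzero k hk).fderiv) hk (Metric.mem_ball_self hε)
  have hinj : Set.InjOn φ B := fun k hk k' hk' hkk' => by
    have := (hball k hk).1.2.symm.trans ((congrArg D.prodFun hkk').trans (hball k' hk').1.2)
    exact congrArg Prod.snd this
  have := Module.punctured_nhds_neBot 𝕜 G (D.rightFun D.pt)
  refine ((infinite_of_mem_nhds _ (Metric.ball_mem_nhds _ hε)).image hinj).mono ?_
  rintro _ ⟨k, hk, rfl⟩
  exact ⟨(hball k hk).2.1, hconst k hk⟩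

end ImplicitFunction

variable [FiniteDimensional 𝕜 E] [FiniteDimensional 𝕜 F]

/-- The constant rank theorem on the open set where the rank of the derivative is maximal. -/
theorem infinite_fibre_of_isMaxOn_finrank_range {f : E → F} (hf : ContDiff 𝕜 1 f) {W : Set E}
    (hW : IsOpen W) {x : E} (hx : x ∈ W)
    (hmax : IsMaxOn (fun y => Module.finrank 𝕜 (fderiv 𝕜 f y).range) W x)
    (hinj : ¬ Function.Injective (fderiv 𝕜 f x)) : {y | y ∈ W ∧ f y = f x}.Infinite := by
  have := FiniteDimensional.complete 𝕜 E
  obtain ⟨π₀, hπ₀⟩ := (fderiv 𝕜 f x).range.subtype.exists_leftInverse_of_injective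
    (Submodule.ker_subtype _)
  let π := LinearMap.toContinuousLinearMap π₀
  have hπf : ContDiff 𝕜 1 (π ∘ f) := π.contDiff.comp hf
  have hcomp (y : E) : fderiv 𝕜 (π ∘ f) y = π.comp (fderiv 𝕜 f y) :=
    (π.hasFDerivAt.comp y (hf.differentiable one_ne_zero y).hasFDerivAt).fderiv
  have hsurj : Function.Surjective (fderiv 𝕜 (π ∘ f) x) := by
    rintro ⟨_, v, rfl⟩
    exact ⟨v, by rw [hcomp]; exact LinearMap.congr_fun hπ₀ ⟨_, v, rfl⟩⟩
  have hker : ∀ᶠ y in 𝓝 x, y ∈ W ∧ (fderiv 𝕜 (π ∘ f) y).ker = (fderiv 𝕜 f y).ker := by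
    filter_upwards [hW.mem_nhds hx, (hπf.continuous_fderiv one_ne_zero).continuousAt.eventually
      (eventually_surjective_nhds hsurj)] with y hy hysurj
    rw [hcomp] at hysurj ⊢
    exact ⟨hy, ker_comp_eq_of_surjective hysurj (hmax hy)⟩
  have : Nontrivial (fderiv 𝕜 (π ∘ f) x).ker := by
    rw [hker.self_of_nhds.2, Submodule.nontrivial_iff_ne_bot]
    exact fun h => hinj (LinearMap.ker_eq_bot.1 h)
  exact infinite_fibre_of_ker_fderiv_le
    (HasStrictFDerivAt.implicitFunctionDataOfComplemented (π ∘ f) (fderiv 𝕜 (π ∘ f) x)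
      (hπf.contDiffAt.hasStrictFDerivAt one_ne_zero) (LinearMap.range_eq_top.2 hsurj)
      (fderiv 𝕜 (π ∘ f) x).ker_closedComplemented_of_finiteDimensional_range)
    hπf (by dsimp; fun_prop) (hf.differentiable one_ne_zero) (hker.mono fun y hy => ⟨hy.1, hy.2.le⟩)

theorem exists_infinite_fibre {f : E → F} (hf : ContDiff 𝕜 1 f) {W : Set E} (hW : IsOpen W)
    (hne : W.Nonempty) (hinj : ∀ x ∈ W, ¬ Function.Injective (fderiv 𝕜 f x)) :
    ∃ x ∈ W, {y | y ∈ W ∧ f y = f x}.Infinite := by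
  obtain ⟨x, hx, hmax⟩ := exists_isMaxOn_of_bddAbove_nat
    (f := fun y => Module.finrank 𝕜 (fderiv 𝕜 f y).range) hne
    ⟨Module.finrank 𝕜 F, by rintro _ ⟨y, _, rfl⟩; exact Submodule.finrank_le _⟩
  exact ⟨x, hx, infinite_fibre_of_isMaxOn_finrank_range hf hW hx hmax (hinj x hx)⟩

theorem exists_infinite_fibre_polyMap {ι ν : Type*} [Finite ι] [Fintype ν]
    (Φ : ι → MvPolynomial ν 𝕜) (hinj : ∀ x, ¬ Function.Injective (jacobian Φ x).mulVec)
    {p : (ν → 𝕜) → Prop} (hp : ∀ᶠ x in generic ν 𝕜, p x) :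
    ∃ x, {y | p y ∧ polyMap Φ y = polyMap Φ x}.Infinite := by
  have := Fintype.ofFinite ι
  obtain ⟨g, hg, hgp⟩ := eventually_generic.1 hp
  have hne : {x | eval x g ≠ 0}.Nonempty := (eventually_generic.2 ⟨g, hg, fun _ => id⟩).exists
  have hopen : IsOpen {x | eval x g ≠ 0} :=
    isOpen_ne.preimage (contDiff_eval g (m := 1)).continuous
  obtain ⟨x, _, hinf⟩ := exists_infinite_fibre (contDiff_polyMap Φ) hopen hne fun x _ h =>
    hinj x (by rwa [← coe_fderiv_polyMap])
  exact ⟨x, hinf.mono fun y hy => ⟨hgp y hy.1, hy.2⟩⟩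

end InfiniteFibres

end PolynomialMaps

section Determinants

variable {m R : Type*} [Fintype m] [DecidableEq m] [CommRing R]

theorem trace_adjugate_mul_eq_sum_det (M N : Matrix m m R) :
    trace (adjugate M * N) = ∑ i, (M.updateCol i (N.col i)).det := by
  refine Finset.sum_congr rfl fun i _ => ?_
  rw [← cramer_apply, cramer_eq_adjugate_mulVec]
  rfl

theorem trace_adjugate_mul_mul_left (C M N : Matrix m m R) :
    trace (adjugate (C * M) * (C * N)) = C.det * trace (adjugate M * N) := by
  rw [adjugate_mul_distrib, Matrix.mul_assoc, ← Matrix.mul_assoc (adjugate C), adjugate_mul]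
  simp

theorem trace_adjugate_mul_mul_right (M N B : Matrix m m R) :
    trace (adjugate (M * B) * (N * B)) = B.det * trace (adjugate M * N) := by
  rw [adjugate_mul_distrib, ← Matrix.mul_assoc, trace_mul_comm, Matrix.mul_assoc,
    ← Matrix.mul_assoc, mul_adjugate]
  simp

theorem hasDerivAt_det_add_smul {𝕜 : Type*} [NontriviallyNormedField 𝕜] (M N : Matrix m m 𝕜) :
    HasDerivAt (fun t : 𝕜 => (M + t • N).det) (trace (adjugate M * N)) 0 := by
  have hentry (i j : m) : HasDerivAt (fun t : 𝕜 => (M + t • N) i j) (N i j) 0 := by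
    simpa using ((hasDerivAt_id (0 : 𝕜)).mul_const (N i j)).const_add (M i j)
  have hterm (σ : Equiv.Perm m) := (HasDerivAt.fun_finsetProd (u := Finset.univ) fun i _ =>
    hentry (σ i) i).const_mul ((Equiv.Perm.sign σ : ℤ) : 𝕜)
  simp only [det_apply']
  refine (HasDerivAt.fun_sum fun σ _ => hterm σ).congr_deriv ?_
  rw [trace_adjugate_mul_eq_sum_det]
  simp only [det_apply', Finset.mul_sum]
  rw [Finset.sum_comm]
  refine Finset.sum_congr rfl fun i _ => Finset.sum_congr rfl fun σ _ => ?_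
  rw [← Finset.mul_prod_erase _ _ (Finset.mem_univ i), updateCol_self, smul_eq_mul,
    mul_comm (N.col i _)]
  congr 2
  refine Finset.prod_congr rfl fun j hj => ?_
  rw [updateCol_ne (Finset.ne_of_mem_erase hj)]
  simp

end Determinants

section FundamentalMatrix

section CommRing

variable {R : Type*} [CommRing R]

/-- The matrix whose determinant is, up to sign, the `(h, k)` entry of `fund P Q`. -/
def stacked (P Q : Matrix (Fin 3) (Fin 4) R) (h k : Fin 3) : Matrix (Fin 4) (Fin 4) R :=
  of ![P (k.succAbove 0), P (k.succAbove 1), Q (h.succAbove 0), Q (h.succAbove 1)]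

theorem fund_apply (P Q : Matrix (Fin 3) (Fin 4) R) (h k : Fin 3) :
    fund P Q h k = (-1) ^ (h + k : ℕ) * (stacked P Q h k).det := by
  rw [fund, of_apply]
  congr 2
  ext r c
  fin_cases r <;> rfl

theorem stacked_add_smul (P Q X Y : Matrix (Fin 3) (Fin 4) R) (t : R) (h k : Fin 3) :
    stacked (P + t • X) (Q + t • Y) h k = stacked P Q h k + t • stacked X Y h k := by
  ext r c
  fin_cases r <;> rfl

theorem stacked_mul (P Q : Matrix (Fin 3) (Fin 4) R) (B : Matrix (Fin 4) (Fin 4) R) (h k : Fin 3) :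
    stacked (P * B) (Q * B) h k = stacked P Q h k * B := by
  ext r c
  fin_cases r <;> rfl

theorem stacked_smul (a b : R) (P Q : Matrix (Fin 3) (Fin 4) R) (h k : Fin 3) :
    stacked (a • P) (b • Q) h k = diagonal ![a, a, b, b] * stacked P Q h k := by
  ext r c
  rw [diagonal_mul]
  fin_cases r <;> rfl

/-- The permutation matrix exchanging the two halves of the rows of a stacked matrix. -/
def blockSwap (R : Type*) [CommRing R] : Matrix (Fin 4) (Fin 4) R :=
  (1 : Matrix (Fin 4) (Fin 4) R).submatrix (Equiv.addRight 2) id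

theorem det_blockSwap : (blockSwap R).det = 1 := by
  rw [blockSwap, det_permute, det_one, mul_one]
  rw [show Equiv.Perm.sign (Equiv.addRight (2 : Fin 4)) = 1 by decide]
  simp

theorem stacked_swap (P Q : Matrix (Fin 3) (Fin 4) R) (h k : Fin 3) :
    stacked Q P k h = blockSwap R * stacked P Q h k := by
  rw [blockSwap, ← Equiv.coe_refl, one_submatrix_mul]
  ext r c
  fin_cases r <;> rfl

theorem fund_mul (P Q : Matrix (Fin 3) (Fin 4) R) (B : Matrix (Fin 4) (Fin 4) R) :
    fund (P * B) (Q * B) = B.det • fund P Q := by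
  ext h k
  simp only [fund_apply, stacked_mul, det_mul, Matrix.smul_apply, smul_eq_mul]
  ring

theorem fund_smul (a b : R) (P Q : Matrix (Fin 3) (Fin 4) R) :
    fund (a • P) (b • Q) = (a ^ 2 * b ^ 2) • fund P Q := by
  ext h k
  simp only [fund_apply, stacked_smul, det_mul, det_diagonal, Fin.prod_univ_four, cons_val,
    Matrix.smul_apply, smul_eq_mul]
  ring

theorem fund_swap (P Q : Matrix (Fin 3) (Fin 4) R) : fund Q P = (fund P Q)ᵀ := by
  ext k h
  rw [transpose_apply, fund_apply, fund_apply, stacked_swap, det_mul, det_blockSwap, one_mul,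
    add_comm]

theorem fund_map {S : Type*} [CommRing S] (f : R →+* S) (P Q : Matrix (Fin 3) (Fin 4) R) :
    fund (P.map f) (Q.map f) = (fund P Q).map f := by
  ext h k
  rw [map_apply, fund_apply, fund_apply, map_mul, map_pow, map_neg, map_one, RingHom.map_det]
  congr 2
  ext r c
  fin_cases r <;> rfl

/-- The derivative of `fund` at `(P, Q)`, by Jacobi's formula for the derivative of a
determinant. -/
def fundDeriv (P Q : Matrix (Fin 3) (Fin 4) R) :
    Matrix (Fin 3) (Fin 4) R × Matrix (Fin 3) (Fin 4) R →ₗ[R] Matrix (Fin 3) (Fin 3) R where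
  toFun H := of fun h k =>
    (-1) ^ (h + k : ℕ) * trace (adjugate (stacked P Q h k) * stacked H.1 H.2 h k)
  map_add' H H' := by
    ext h k
    have := stacked_add_smul H.1 H.2 H'.1 H'.2 1 h k
    simp only [one_smul] at this
    simp [this, mul_add]
  map_smul' c H := by
    ext h k
    have := stacked_add_smul 0 0 H.1 H.2 c h k
    have h0 : stacked (0 : Matrix (Fin 3) (Fin 4) R) 0 h k = 0 := by ext r c; fin_cases r <;> rfl
    simp only [zero_add, h0] at this
    simp [this, mul_left_comm]

theorem fundDeriv_apply (P Q X Y : Matrix (Fin 3) (Fin 4) R) (h k : Fin 3) :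
    fundDeriv P Q (X, Y) h k =
      (-1) ^ (h + k : ℕ) * trace (adjugate (stacked P Q h k) * stacked X Y h k) := rfl

theorem fundDeriv_mul (P Q X Y : Matrix (Fin 3) (Fin 4) R) (B : Matrix (Fin 4) (Fin 4) R) :
    fundDeriv (P * B) (Q * B) (X * B, Y * B) = B.det • fundDeriv P Q (X, Y) := by
  ext h k
  simp only [fundDeriv_apply, stacked_mul, trace_adjugate_mul_mul_right, Matrix.smul_apply,
    smul_eq_mul]
  ring

theorem fundDeriv_smul (a b : R) (P Q X Y : Matrix (Fin 3) (Fin 4) R) :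
    fundDeriv (a • P) (b • Q) (a • X, b • Y) = (a ^ 2 * b ^ 2) • fundDeriv P Q (X, Y) := by
  ext h k
  simp only [fundDeriv_apply, stacked_smul, trace_adjugate_mul_mul_left, det_diagonal,
    Fin.prod_univ_four, cons_val, Matrix.smul_apply, smul_eq_mul]
  ring

theorem fundDeriv_swap (P Q X Y : Matrix (Fin 3) (Fin 4) R) :
    fundDeriv Q P (Y, X) = (fundDeriv P Q (X, Y))ᵀ := by
  ext k h
  rw [transpose_apply, fundDeriv_apply, fundDeriv_apply, stacked_swap P Q, stacked_swap X Y,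
    trace_adjugate_mul_mul_left, det_blockSwap, one_mul, add_comm]

theorem fundDeriv_gauge (P Q : Matrix (Fin 3) (Fin 4) R) (A : Matrix (Fin 4) (Fin 4) R) (a b : R) :
    fundDeriv P Q (P * A + a • P, Q * A + b • Q) = (trace A + 2 * a + 2 * b) • fund P Q := by
  ext h k
  have hstk : stacked (P * A + a • P) (Q * A + b • Q) h k =
      stacked P Q h k * A + diagonal ![a, a, b, b] * stacked P Q h k := by
    rw [← stacked_mul, ← stacked_smul]
    ext r c
    fin_cases r <;> rfl
  have hleft : trace (adjugate (stacked P Q h k) * (stacked P Q h k * A)) =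
      (stacked P Q h k).det * trace A := by
    simp [← Matrix.mul_assoc, adjugate_mul]
  have hright : trace (adjugate (stacked P Q h k) * (diagonal ![a, a, b, b] * stacked P Q h k)) =
      (stacked P Q h k).det * (2 * a + 2 * b) := by
    rw [trace_mul_comm, Matrix.mul_assoc, mul_adjugate]
    simp only [Matrix.mul_smul, Matrix.mul_one, trace_smul, trace_diagonal, Fin.sum_univ_four,
      cons_val, smul_eq_mul]
    ring
  rw [fundDeriv_apply, hstk, Matrix.mul_add, trace_add, hleft, hright, Matrix.smul_apply,
    fund_apply, smul_eq_mul]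
  ring

end CommRing

theorem hasDerivAt_fund {𝕜 : Type*} [NontriviallyNormedField 𝕜]
    (P Q X Y : Matrix (Fin 3) (Fin 4) 𝕜) (h k : Fin 3) :
    HasDerivAt (fun t : 𝕜 => fund (P + t • X) (Q + t • Y) h k) (fundDeriv P Q (X, Y) h k) 0 := by
  simp only [fund_apply, stacked_add_smul, fundDeriv_apply]
  exact (hasDerivAt_det_add_smul _ _).const_mul _

section Field

variable {K : Type*} [Field K]

theorem rank_eq_card_iff_vecMul_injective {m n : Type*} [Fintype m] [Fintype n]
    (A : Matrix m n K) : A.rank = Fintype.card m ↔ Function.Injective A.vecMul := by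
  rw [vecMul_injective_iff, linearIndependent_iff_card_eq_finrank_span, rank_eq_finrank_span_row,
    Set.finrank, eq_comm]

theorem exists_eq_smul_of_mul_eq_mul {ι κ : Type*} {a a' : ι → K} {x x' : κ → K} (ha : a ≠ 0)
    (hx : x ≠ 0) (h : ∀ i j, a' i * x' j = a i * x j) :
    ∃ s : K, s ≠ 0 ∧ a' = s • a ∧ x' = s⁻¹ • x := by
  obtain ⟨i, hi⟩ := Function.ne_iff.mp ha
  obtain ⟨j, hj⟩ := Function.ne_iff.mp hx
  have hij : a' i * x' j ≠ 0 := by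
    rw [h]
    exact mul_ne_zero hi hj
  have ha' : a' i ≠ 0 := left_ne_zero_of_mul hij
  have hx' : x' j ≠ 0 := right_ne_zero_of_mul hij
  refine ⟨x j / x' j, div_ne_zero hj hx', funext fun k => ?_, funext fun k => ?_⟩
  · rw [Pi.smul_apply, smul_eq_mul, div_mul_eq_mul_div, eq_div_iff hx', h, mul_comm]
  · have hs : (x j / x' j)⁻¹ = a i / a' i := by
      rw [inv_div, div_eq_div_iff hj ha', mul_comm, h]
    rw [Pi.smul_apply, smul_eq_mul, hs, div_mul_eq_mul_div, eq_div_iff ha', mul_comm, h]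

theorem exists_eq_smul_of_mul_add_mul_eq_zero {ι κ : Type*} {a a' : ι → K} {x x' : κ → K}
    (ha : a ≠ 0) (hx : x ≠ 0) (h : ∀ i j, a' i * x j + a i * x' j = 0) :
    ∃ s : K, a' = s • a ∧ x' = -s • x := by
  obtain ⟨i, hi⟩ := Function.ne_iff.mp ha
  obtain ⟨j, hj⟩ := Function.ne_iff.mp hx
  have hi : a i ≠ 0 := hi
  have hj : x j ≠ 0 := hj
  refine ⟨-(x' j / x j), funext fun k => ?_, funext fun k => ?_⟩
  · rw [Pi.smul_apply, smul_eq_mul]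
    field_simp
    linear_combination h k j
  · rw [Pi.smul_apply, smul_eq_mul, neg_neg]
    field_simp
    refine mul_left_cancel₀ hi ?_
    linear_combination x j * h i k - x k * h i j

/-- The first camera of a pair in canonical form: a pair whose first two rows are, together, the
standard basis. -/
def canonicalLeft (p : Fin 4 → K) : Matrix (Fin 3) (Fin 4) K :=
  of ![![1, 0, 0, 0], ![0, 1, 0, 0], p]

/-- The second camera of a pair in canonical form; see `canonicalLeft`. -/
def canonicalRight (q : Fin 4 → K) : Matrix (Fin 3) (Fin 4) K :=
  of ![![0, 0, 1, 0], ![0, 0, 0, 1], q]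

theorem stacked_canonical (p q : Fin 4 → K) :
    stacked (canonicalLeft p) (canonicalRight q) 2 2 = 1 := by
  ext r c
  fin_cases r <;> fin_cases c <;> rfl

theorem canonicalLeft_mul (p : Fin 4 → K) (M : Matrix (Fin 4) (Fin 4) K) :
    canonicalLeft p * M = of ![M 0, M 1, p ᵥ* M] := by
  ext r c
  fin_cases r <;> simp [canonicalLeft, mul_apply, vecMul, dotProduct, Fin.sum_univ_four]

theorem canonicalRight_mul (q : Fin 4 → K) (M : Matrix (Fin 4) (Fin 4) K) :
    canonicalRight q * M = of ![M 2, M 3, q ᵥ* M] := by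
  ext r c
  fin_cases r <;> simp [canonicalRight, mul_apply, vecMul, dotProduct, Fin.sum_univ_four]

theorem exists_eq_canonical_mul {P Q : Matrix (Fin 3) (Fin 4) K} (h : fund P Q 2 2 ≠ 0) :
    ∃ (M : Matrix (Fin 4) (Fin 4) K) (p q : Fin 4 → K), IsUnit M ∧
      P = canonicalLeft p * M ∧ Q = canonicalRight q * M := by
  have hdet : IsUnit (stacked P Q 2 2).det := by
    rw [fund_apply] at h
    exact (right_ne_zero_of_mul h).isUnit
  refine ⟨stacked P Q 2 2, P 2 ᵥ* (stacked P Q 2 2)⁻¹, Q 2 ᵥ* (stacked P Q 2 2)⁻¹,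
    (isUnit_iff_isUnit_det _).2 hdet, ?_, ?_⟩
  · rw [canonicalLeft_mul, vecMul_vecMul, nonsing_inv_mul _ hdet, vecMul_one]
    ext r c
    fin_cases r <;> rfl
  · rw [canonicalRight_mul, vecMul_vecMul, nonsing_inv_mul _ hdet, vecMul_one]
    ext r c
    fin_cases r <;> rfl

theorem fund_canonical (p q : Fin 4 → K) :
    fund (canonicalLeft p) (canonicalRight q) =
      !![q 2 * p 0 - p 2 * q 0, q 2 * p 1 - p 2 * q 1, -q 2;
         q 3 * p 0 - p 3 * q 0, q 3 * p 1 - p 3 * q 1, -q 3;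
         -p 0, -p 1, 1] := by
  ext h k
  rw [fund_apply]
  fin_cases h <;> fin_cases k <;>
    simp [stacked, canonicalLeft, canonicalRight, det_succ_row_zero, Fin.sum_univ_succ,
      Fin.succAbove] <;> ring

theorem fundDeriv_canonical (p q x y : Fin 4 → K) :
    fundDeriv (canonicalLeft p) (canonicalRight q) (of ![0, 0, x], of ![0, 0, y]) =
      !![y 2 * p 0 + q 2 * x 0 - x 2 * q 0 - p 2 * y 0,
           y 2 * p 1 + q 2 * x 1 - x 2 * q 1 - p 2 * y 1, -y 2;
         y 3 * p 0 + q 3 * x 0 - x 3 * q 0 - p 3 * y 0,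
           y 3 * p 1 + q 3 * x 1 - x 3 * q 1 - p 3 * y 1, -y 3;
         -x 0, -x 1, 0] := by
  ext h k
  rw [fundDeriv_apply, trace_adjugate_mul_eq_sum_det]
  fin_cases h <;> fin_cases k <;>
    simp [stacked, canonicalLeft, canonicalRight, det_succ_row_zero, Fin.sum_univ_succ,
      Fin.succAbove, updateCol_apply] <;> ring

theorem ne_zero_of_rank_canonicalLeft {p : Fin 4 → K} (h : (canonicalLeft p).rank = 3) :
    ![p 2, p 3] ≠ 0 := by
  intro hp
  have hinj := (rank_eq_card_iff_vecMul_injective _).1 h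
  have hker : ![p 0, p 1, -1] ᵥ* canonicalLeft p = 0 := by
    have h2 : p 2 = 0 := congrFun hp 0
    have h3 : p 3 = 0 := congrFun hp 1
    ext c
    fin_cases c <;> simp [vecMul, dotProduct, canonicalLeft, Fin.sum_univ_three, h2, h3]
  simpa using congrFun (hinj (hker.trans (zero_vecMul _).symm)) 2

theorem ne_zero_of_rank_canonicalRight {q : Fin 4 → K} (h : (canonicalRight q).rank = 3) :
    ![q 0, q 1] ≠ 0 := by
  intro hq
  have hinj := (rank_eq_card_iff_vecMul_injective _).1 h
  have hker : ![q 2, q 3, -1] ᵥ* canonicalRight q = 0 := by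
    have h0 : q 0 = 0 := congrFun hq 0
    have h1 : q 1 = 0 := congrFun hq 1
    ext c
    fin_cases c <;> simp [vecMul, dotProduct, canonicalRight, Fin.sum_univ_three, h0, h1]
  simpa using congrFun (hinj (hker.trans (zero_vecMul _).symm)) 2

theorem exists_gauge_canonical {p q p' q' : Fin 4 → K} (hp : (canonicalLeft p).rank = 3)
    (hq : (canonicalRight q).rank = 3) {μ : K}
    (h : fund (canonicalLeft p') (canonicalRight q') =
      μ • fund (canonicalLeft p) (canonicalRight q)) :
    ∃ (B : Matrix (Fin 4) (Fin 4) K) (b : K), IsUnit B ∧ b ≠ 0 ∧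
      canonicalLeft p' = canonicalLeft p * B ∧ canonicalRight q' = b • (canonicalRight q * B) := by
  simp only [fund_canonical] at h
  have entry (i j : Fin 3) := congrFun (congrFun h i) j
  have hμ : μ = 1 := by simpa using (entry 2 2).symm
  subst hμ
  have hp0 : p' 0 = p 0 := by simpa using entry 2 0
  have hp1 : p' 1 = p 1 := by simpa using entry 2 1
  have hq2 : q' 2 = q 2 := by simpa using entry 0 2
  have hq3 : q' 3 = q 3 := by simpa using entry 1 2
  have hprod (i j : Fin 2) : ![p' 2, p' 3] i * ![q' 0, q' 1] j = ![p 2, p 3] i * ![q 0, q 1] j := by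
    have hij := entry i.castSucc j.castSucc
    fin_cases i <;> fin_cases j <;> simpa [hp0, hp1, hq2, hq3] using hij
  obtain ⟨s, hs, hps, hqs⟩ := exists_eq_smul_of_mul_eq_mul (ne_zero_of_rank_canonicalLeft hp)
    (ne_zero_of_rank_canonicalRight hq) hprod
  have hp2 : p' 2 = s * p 2 := congrFun hps 0
  have hp3 : p' 3 = s * p 3 := congrFun hps 1
  have hq0 : q' 0 = s⁻¹ * q 0 := congrFun hqs 0
  have hq1 : q' 1 = s⁻¹ * q 1 := congrFun hqs 1
  refine ⟨diagonal ![1, 1, s, s], s⁻¹, ?_, inv_ne_zero hs, ?_, ?_⟩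
  · simp [isUnit_iff_isUnit_det, Fin.prod_univ_four, hs]
  · ext r c
    rw [mul_diagonal]
    fin_cases r <;> fin_cases c <;> simp [canonicalLeft, hp0, hp1, hp2, hp3, mul_comm s]
  · ext r c
    rw [Matrix.smul_apply, mul_diagonal]
    fin_cases r <;> fin_cases c <;> simp [canonicalRight, hq0, hq1, hq2, hq3, hs, mul_comm _ s]

theorem exists_gauge_of_fund_eq_smul {P Q P' Q' : Matrix (Fin 3) (Fin 4) K} (hP : P.rank = 3)
    (hQ : Q.rank = 3) (h0 : fund P Q 2 2 ≠ 0) {μ : K} (hμ : μ ≠ 0)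
    (h : fund P' Q' = μ • fund P Q) :
    ∃ (B : Matrix (Fin 4) (Fin 4) K) (b : K), IsUnit B ∧ b ≠ 0 ∧ P' = P * B ∧ Q' = b • (Q * B) := by
  have h0' : fund P' Q' 2 2 ≠ 0 := by
    rw [h]
    exact mul_ne_zero hμ h0
  obtain ⟨M, p, q, hM, rfl, rfl⟩ := exists_eq_canonical_mul h0
  obtain ⟨M', p', q', hM', rfl, rfl⟩ := exists_eq_canonical_mul h0'
  have hdet := (isUnit_iff_isUnit_det _).1 hM
  have hdet' := (isUnit_iff_isUnit_det _).1 hM'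
  rw [rank_mul_eq_left_of_isUnit_det _ _ hdet] at hP hQ
  have hcan : fund (canonicalLeft p') (canonicalRight q') =
      (M'.det⁻¹ * (μ * M.det)) • fund (canonicalLeft p) (canonicalRight q) := by
    rw [fund_mul, fund_mul, smul_smul] at h
    rw [mul_smul, ← h, inv_smul_smul₀ hdet'.ne_zero]
  obtain ⟨B, b, hB, hb, hleft, hright⟩ := exists_gauge_canonical hP hQ hcan
  have hconj : M * (M⁻¹ * (B * M')) = B * M' := mul_nonsing_inv_cancel_left _ _ hdet
  refine ⟨M⁻¹ * (B * M'), b, ?_, hb, ?_, ?_⟩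
  · exact ((isUnit_nonsing_inv_iff).2 hM).mul (hB.mul hM')
  · rw [Matrix.mul_assoc, hconj, hleft, Matrix.mul_assoc]
  · rw [Matrix.mul_assoc, hconj, hright, Matrix.smul_mul, Matrix.mul_assoc]

theorem exists_last_rows_eq {p q x y : Fin 4 → K} (hp : (canonicalLeft p).rank = 3)
    (hq : (canonicalRight q).rank = 3) {c : K}
    (h : fundDeriv (canonicalLeft p) (canonicalRight q) (of ![0, 0, x], of ![0, 0, y]) =
      c • fund (canonicalLeft p) (canonicalRight q)) :
    ∃ t : K, x = ![0, 0, t * p 2, t * p 3] ∧ y = ![-t * q 0, -t * q 1, 0, 0] := by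
  rw [fundDeriv_canonical, fund_canonical] at h
  have entry (i j : Fin 3) := congrFun (congrFun h i) j
  have hc : c = 0 := by simpa using (entry 2 2).symm
  subst hc
  have hx0 : x 0 = 0 := by simpa using entry 2 0
  have hx1 : x 1 = 0 := by simpa using entry 2 1
  have hy2 : y 2 = 0 := by simpa using entry 0 2
  have hy3 : y 3 = 0 := by simpa using entry 1 2
  have hprod (i j : Fin 2) :
      ![x 2, x 3] i * ![q 0, q 1] j + ![p 2, p 3] i * ![y 0, y 1] j = 0 := by
    have hij := entry i.castSucc j.castSucc
    rw [← neg_eq_zero]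
    fin_cases i <;> fin_cases j <;> simpa [hx0, hx1, hy2, hy3, sub_eq_add_neg, add_comm] using hij
  obtain ⟨t, hxt, hyt⟩ := exists_eq_smul_of_mul_add_mul_eq_zero (ne_zero_of_rank_canonicalLeft hp)
    (ne_zero_of_rank_canonicalRight hq) hprod
  have hx2 : x 2 = t * p 2 := congrFun hxt 0
  have hx3 : x 3 = t * p 3 := congrFun hxt 1
  have hy0 : y 0 = -t * q 0 := congrFun hyt 0
  have hy1 : y 1 = -t * q 1 := congrFun hyt 1
  refine ⟨t, funext fun i => ?_, funext fun i => ?_⟩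
  · fin_cases i <;> assumption
  · fin_cases i <;> assumption

theorem exists_infinitesimal_gauge_canonical {p q : Fin 4 → K} (hp : (canonicalLeft p).rank = 3)
    (hq : (canonicalRight q).rank = 3) {X Y : Matrix (Fin 3) (Fin 4) K} {c : K}
    (h : fundDeriv (canonicalLeft p) (canonicalRight q) (X, Y) =
      c • fund (canonicalLeft p) (canonicalRight q)) :
    ∃ (A : Matrix (Fin 4) (Fin 4) K) (b : K),
      X = canonicalLeft p * A ∧ Y = canonicalRight q * A + b • canonicalRight q := by
  set S := stacked X Y 2 2
  set x : Fin 4 → K := X 2 - p ᵥ* S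
  set y : Fin 4 → K := Y 2 - q ᵥ* S
  have hX : X = canonicalLeft p * S + of ![0, 0, x] := by
    rw [canonicalLeft_mul]
    ext r c
    fin_cases r <;> simp [S, x, stacked, Fin.succAbove]
  have hY : Y = canonicalRight q * S + of ![0, 0, y] := by
    rw [canonicalRight_mul]
    ext r c
    fin_cases r <;> simp [S, y, stacked, Fin.succAbove]
  have hred : fundDeriv (canonicalLeft p) (canonicalRight q) (of ![0, 0, x], of ![0, 0, y]) =
      (c - trace S) • fund (canonicalLeft p) (canonicalRight q) := by
    have hS := fundDeriv_gauge (canonicalLeft p) (canonicalRight q) S 0 0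
    simp only [zero_smul, add_zero, mul_zero] at hS
    rw [sub_smul, ← h, ← hS, ← map_sub, Prod.mk_sub_mk]
    congr 2
    · exact (sub_eq_of_eq_add' hX).symm
    · exact (sub_eq_of_eq_add' hY).symm
  obtain ⟨t, hx, hy⟩ := exists_last_rows_eq hp hq hred
  refine ⟨S + diagonal ![0, 0, t, t], -t, ?_, ?_⟩
  · rw [Matrix.mul_add]
    refine hX.trans (congrArg _ ?_)
    ext r c
    rw [mul_diagonal]
    fin_cases r <;> fin_cases c <;> simp [canonicalLeft, hx, mul_comm]
  · rw [Matrix.mul_add, add_assoc]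
    refine hY.trans (congrArg _ ?_)
    ext r c
    rw [Matrix.add_apply, mul_diagonal]
    fin_cases r <;> fin_cases c <;> simp [canonicalRight, hy, mul_comm]

theorem exists_infinitesimal_gauge_of_fundDeriv_eq_smul {P Q X Y : Matrix (Fin 3) (Fin 4) K}
    (hP : P.rank = 3) (hQ : Q.rank = 3) (h0 : fund P Q 2 2 ≠ 0) {c : K}
    (h : fundDeriv P Q (X, Y) = c • fund P Q) :
    ∃ (A : Matrix (Fin 4) (Fin 4) K) (b : K), X = P * A ∧ Y = Q * A + b • Q := by
  obtain ⟨M, p, q, hM, rfl, rfl⟩ := exists_eq_canonical_mul h0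
  have hdet := (isUnit_iff_isUnit_det _).1 hM
  rw [rank_mul_eq_left_of_isUnit_det _ _ hdet] at hP hQ
  have hcan : fundDeriv (canonicalLeft p) (canonicalRight q) (X * M⁻¹, Y * M⁻¹) =
      c • fund (canonicalLeft p) (canonicalRight q) := by
    have hXY := fundDeriv_mul (canonicalLeft p) (canonicalRight q) (X * M⁻¹) (Y * M⁻¹) M
    rw [nonsing_inv_mul_cancel_right _ _ hdet, nonsing_inv_mul_cancel_right _ _ hdet, h, fund_mul,
      smul_comm] at hXY
    exact (smul_right_injective _ hdet.ne_zero hXY).symm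
  obtain ⟨A, b, hX, hY⟩ := exists_infinitesimal_gauge_canonical hP hQ hcan
  have hconj : M * (M⁻¹ * (A * M)) = A * M := mul_nonsing_inv_cancel_left _ _ hdet
  refine ⟨M⁻¹ * (A * M), b, ?_, ?_⟩
  · rw [Matrix.mul_assoc, hconj, ← Matrix.mul_assoc, ← hX, nonsing_inv_mul_cancel_right _ _ hdet]
  · rw [Matrix.mul_assoc, hconj, ← Matrix.mul_assoc, ← Matrix.smul_mul, ← Matrix.add_mul, ← hY,
      nonsing_inv_mul_cancel_right _ _ hdet]

theorem eq_of_infinitesimal_gauge_canonical_eq_zero {p q : Fin 4 → K}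
    (hp : (canonicalLeft p).rank = 3) {A : Matrix (Fin 4) (Fin 4) K} {a b : K}
    (hA : canonicalLeft p * A + a • canonicalLeft p = 0)
    (hB : canonicalRight q * A + b • canonicalRight q = 0) : A = -a • 1 ∧ a = b := by
  have hdiag : A = -diagonal ![a, a, b, b] := by
    have hstk := stacked_add_smul (canonicalLeft p * A) (canonicalRight q * A)
      (a • canonicalLeft p) (b • canonicalRight q) 1 2 2
    rw [one_smul, one_smul, one_smul, hA, hB, stacked_mul, stacked_smul, stacked_canonical,
      Matrix.one_mul, Matrix.mul_one] at hstk
    rw [eq_neg_iff_add_eq_zero, ← hstk]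
    ext r c
    fin_cases r <;> rfl
  have hlast (c : Fin 4) : p c * ![a, a, b, b] c = a * p c := by
    have hc := congrFun (congrFun hA 2) c
    rw [hdiag, Matrix.mul_neg, Matrix.add_apply, Matrix.neg_apply, mul_diagonal] at hc
    exact neg_add_eq_zero.1 hc
  have hab : a = b := by
    by_contra hab
    have hsub : a - b ≠ 0 := sub_ne_zero.2 hab
    have hp2 : p 2 = 0 := by
      have : p 2 * b = a * p 2 := hlast 2
      exact (mul_eq_zero.1 (by linear_combination -this)).resolve_left hsub
    have hp3 : p 3 = 0 := by
      have : p 3 * b = a * p 3 := hlast 3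
      exact (mul_eq_zero.1 (by linear_combination -this)).resolve_left hsub
    exact ne_zero_of_rank_canonicalLeft hp (by simp [hp2, hp3])
  refine ⟨?_, hab⟩
  rw [hdiag, hab, neg_smul, smul_one_eq_diagonal]
  congr 2
  ext i
  fin_cases i <;> rfl

theorem eq_of_infinitesimal_gauge_eq_zero {P Q : Matrix (Fin 3) (Fin 4) K} (hP : P.rank = 3)
    (h0 : fund P Q 2 2 ≠ 0) {A : Matrix (Fin 4) (Fin 4) K} {a b : K} (hA : P * A + a • P = 0)
    (hB : Q * A + b • Q = 0) : A = -a • 1 ∧ a = b := by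
  obtain ⟨M, p, q, hM, rfl, rfl⟩ := exists_eq_canonical_mul h0
  have hdet := (isUnit_iff_isUnit_det _).1 hM
  rw [rank_mul_eq_left_of_isUnit_det _ _ hdet] at hP
  have hconj {C : Matrix (Fin 3) (Fin 4) K} {s : K} (hC : C * M * A + s • (C * M) = 0) :
      C * (M * A * M⁻¹) + s • C = 0 := by
    have := congrArg (· * M⁻¹) hC
    simpa [Matrix.add_mul, Matrix.mul_assoc, mul_nonsing_inv _ hdet] using this
  obtain ⟨hMA, hab⟩ := eq_of_infinitesimal_gauge_canonical_eq_zero hP (hconj hA) (hconj hB)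
  refine ⟨?_, hab⟩
  calc
    A = M⁻¹ * (M * A * M⁻¹) * M := by
      rw [Matrix.mul_assoc, nonsing_inv_mul_cancel_right _ _ hdet,
        nonsing_inv_mul_cancel_left _ _ hdet]
    _ = -a • 1 := by
      rw [hMA, Matrix.mul_smul, Matrix.mul_one, Matrix.smul_mul, nonsing_inv_mul _ hdet]

end Field

end FundamentalMatrix

section Cameras

open MvPolynomial

variable {n : ℕ} {R : Type*}

/-- The tuple of `3 × 4` matrices with a given family of entries. -/
def cameras (x : Fin n × Fin 3 × Fin 4 → R) (i : Fin n) : Matrix (Fin 3) (Fin 4) R :=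
  of fun r c => x (i, r, c)

/-- The family of all entries of a tuple of `3 × 4` matrices. -/
def entries (P : Fin n → Matrix (Fin 3) (Fin 4) R) (v : Fin n × Fin 3 × Fin 4) : R :=
  P v.1 v.2.1 v.2.2

theorem cameras_entries (P : Fin n → Matrix (Fin 3) (Fin 4) R) : cameras (entries P) = P := rfl

theorem eval_fund_cameras [CommRing R] {τ : Type*} (θ : Fin n × Fin 3 × Fin 4 → MvPolynomial τ R)
    (y : τ → R) (i j : Fin n) (h k : Fin 3) :
    eval y (fund (cameras θ i) (cameras θ j) h k) =
      fund (cameras (polyMap θ y) i) (cameras (polyMap θ y) j) h k :=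
  (congrFun (congrFun (fund_map (eval y) (cameras θ i) (cameras θ j)) h) k).symm

end Cameras

section InfinitesimalRigidity

variable {n : ℕ}

theorem differentiable_fund_apply (i j : Fin n) (h k : Fin 3) :
    Differentiable ℂ fun P : Config n => fund (P i) (P j) h k := by
  have hent : Differentiable ℂ (entries : Config n → Fin n × Fin 3 × Fin 4 → ℂ) :=
    differentiable_pi.2 fun v =>
      (differentiable_pi.1 (differentiable_pi.1 (differentiable_apply v.1) v.2.1) v.2.2)
  have heq : (fun P : Config n => fund (P i) (P j) h k) = (fun x => MvPolynomial.eval x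
      (fund (cameras MvPolynomial.X i) (cameras MvPolynomial.X j) h k)) ∘ entries := by
    ext P
    rw [Function.comp_apply, eval_fund_cameras, polyMap_X, cameras_entries]
  rw [heq]
  exact ((contDiff_eval _ (m := 1)).differentiable one_ne_zero).comp hent

theorem forall_adj_iff_forall_edgeIdx {G : SimpleGraph (Fin n)} {r : Fin n → Fin n → Prop}
    (hr : ∀ i j, r i j → r j i) :
    (∀ i j, G.Adj i j → r i j) ↔ ∀ e : EdgeIdx G, r e.1.1 e.1.2 := by
  refine ⟨fun h e => h _ _ e.2.1, fun h i j hij => ?_⟩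
  rcases hij.ne.lt_or_gt with hlt | hgt
  · exact h ⟨(i, j), hij, hlt⟩
  · exact hr _ _ (h ⟨(j, i), hij.symm, hgt⟩)

theorem differentiableAt_Faff {G : SimpleGraph (Fin n)} {P : Config n}
    (hP : ∀ i j, G.Adj i j → fund (P i) (P j) 2 2 ≠ 0) : DifferentiableAt ℂ (Faff G) P := by
  refine differentiableAt_pi.2 fun e => differentiableAt_pi.2 fun h => differentiableAt_pi.2
    fun k => ?_
  exact ((differentiable_fund_apply _ _ 2 2 P).inv (hP _ _ e.2.1)).mul
    (differentiable_fund_apply _ _ h k P)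

/-- The infinitesimal version of `SolutionSet`: the directions along which, to first order, the
fundamental matrices along the edges of `G` only change by scalars. -/
noncomputable def infinitesimalSolutions (G : SimpleGraph (Fin n)) (P : Config n) :
    Submodule ℂ (Config n) :=
  ⨅ (i) (j) (_ : G.Adj i j), (Submodule.span ℂ {fund (P i) (P j)}).comap
    (fundDeriv (P i) (P j) ∘ₗ (LinearMap.proj i).prod (LinearMap.proj j))

theorem mem_infinitesimalSolutions {G : SimpleGraph (Fin n)} {P H : Config n} :
    H ∈ infinitesimalSolutions G P ↔ ∀ i j, G.Adj i j →
      ∃ c : ℂ, fundDeriv (P i) (P j) (H i, H j) = c • fund (P i) (P j) := by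
  simp [infinitesimalSolutions, Submodule.mem_iInf, Submodule.mem_span_singleton, eq_comm]

theorem mem_infinitesimalSolutions_iff_forall_edgeIdx {G : SimpleGraph (Fin n)} {P H : Config n} :
    H ∈ infinitesimalSolutions G P ↔ ∀ e : EdgeIdx G,
      ∃ c : ℂ, fundDeriv (P e.1.1) (P e.1.2) (H e.1.1, H e.1.2) =
        c • fund (P e.1.1) (P e.1.2) := by
  refine mem_infinitesimalSolutions.trans (forall_adj_iff_forall_edgeIdx fun i j ⟨c, hc⟩ => ?_)
  exact ⟨c, by rw [fundDeriv_swap, hc, transpose_smul, ← fund_swap]⟩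

theorem fderiv_Faff_apply {G : SimpleGraph (Fin n)} {P : Config n}
    (hP : ∀ i j, G.Adj i j → fund (P i) (P j) 2 2 ≠ 0) (H : Config n) (e : EdgeIdx G) :
    fderiv ℂ (Faff G) P H e = (fund (P e.1.1) (P e.1.2) 2 2)⁻¹ •
      (fundDeriv (P e.1.1) (P e.1.2) (H e.1.1, H e.1.2) - (fundDeriv (P e.1.1) (P e.1.2)
        (H e.1.1, H e.1.2) 2 2 / fund (P e.1.1) (P e.1.2) 2 2) • fund (P e.1.1) (P e.1.2)) := by
  have h0 : fund (P e.1.1) (P e.1.2) 2 2 ≠ 0 := hP _ _ e.2.1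
  ext h k
  have hline : HasDerivAt (fun t : ℂ => Faff G (P + t • H) e h k)
      (fderiv ℂ (Faff G) P H e h k) 0 := by
    have := Fintype.ofFinite (EdgeIdx G)
    have hP' := HasFDerivAt.hasLineDerivAt (E := Config n)
      (F := EdgeIdx G → Matrix (Fin 3) (Fin 3) ℂ) (differentiableAt_Faff hP).hasFDerivAt H
    exact hasDerivAt_pi.1 (hasDerivAt_pi.1 (hasDerivAt_pi.1 hP' e) h) k
  have hquot := ((hasDerivAt_fund (P e.1.1) (P e.1.2) (H e.1.1) (H e.1.2) 2 2).inv
    (by simpa using h0)).mul (hasDerivAt_fund (P e.1.1) (P e.1.2) (H e.1.1) (H e.1.2) h k)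
  rw [hline.unique hquot]
  simp only [zero_smul, add_zero, Pi.inv_apply, Matrix.smul_apply, Matrix.sub_apply, smul_eq_mul]
  field_simp
  ring

theorem ker_fderiv_Faff {G : SimpleGraph (Fin n)} {P : Config n}
    (hP : ∀ i j, G.Adj i j → fund (P i) (P j) 2 2 ≠ 0) :
    (fderiv ℂ (Faff G) P).toLinearMap.ker = infinitesimalSolutions G P := by
  ext H
  rw [mem_infinitesimalSolutions_iff_forall_edgeIdx, LinearMap.mem_ker, ContinuousLinearMap.coe_coe,
    funext_iff]
  refine forall_congr' fun e => ?_
  have h0 : fund (P e.1.1) (P e.1.2) 2 2 ≠ 0 := hP _ _ e.2.1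
  rw [fderiv_Faff_apply hP, Pi.zero_apply, smul_eq_zero_iff_right (inv_ne_zero h0), sub_eq_zero]
  refine ⟨fun h => ⟨_, h⟩, fun ⟨c, hc⟩ => ?_⟩
  rw [hc, Matrix.smul_apply, smul_eq_mul, mul_div_cancel_right₀ _ h0]

/-- The tangent map at `P` to the action of projective transformations and camera rescalings. -/
def infinitesimalGauge (P : Config n) :
    (Matrix (Fin 4) (Fin 4) ℂ × (Fin n → ℂ)) →ₗ[ℂ] Config n where
  toFun A i := P i * A.1 + A.2 i • P i
  map_add' A B := by
    ext1 i
    simp only [Prod.fst_add, Prod.snd_add, Pi.add_apply, Matrix.mul_add, add_smul]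
    abel
  map_smul' c A := by
    ext1 i
    simp [smul_smul]

theorem infinitesimalGauge_apply (P : Config n) (A : Matrix (Fin 4) (Fin 4) ℂ) (c : Fin n → ℂ)
    (i : Fin n) : infinitesimalGauge P (A, c) i = P i * A + c i • P i := rfl

theorem range_infinitesimalGauge_le (G : SimpleGraph (Fin n)) (P : Config n) :
    (infinitesimalGauge P).range ≤ infinitesimalSolutions G P := by
  rintro _ ⟨⟨A, c⟩, rfl⟩
  exact mem_infinitesimalSolutions.2 fun i j _ => ⟨_, fundDeriv_gauge _ _ _ _ _⟩

/-- Every infinitesimal solution comes from projective transformations and camera rescalings. -/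
def IsInfinitesimallyRigid (G : SimpleGraph (Fin n)) (P : Config n) : Prop :=
  infinitesimalSolutions G P ≤ (infinitesimalGauge P).range

theorem ker_infinitesimalGauge {P : Config n} (hrank : ∀ i, (P i).rank = 3) {a b : Fin n}
    (hab : fund (P a) (P b) 2 2 ≠ 0) :
    (infinitesimalGauge P).ker = Submodule.span ℂ {(-1, fun _ => 1)} := by
  ext ⟨A, c⟩
  rw [Submodule.mem_span_singleton, LinearMap.mem_ker]
  constructor
  · intro h
    have hzero (i : Fin n) : P i * A + c i • P i = 0 := congrFun h i
    obtain ⟨hA, -⟩ := eq_of_infinitesimal_gauge_eq_zero (hrank a) hab (hzero a) (hzero b)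
    refine ⟨c a, Prod.ext ?_ (funext fun i => ?_)⟩
    · rw [hA, Prod.smul_fst, smul_neg, neg_smul]
    · have hi : P i ≠ 0 := by
        intro hi
        simpa [hi] using hrank i
      have hci : (c i - c a) • P i = 0 := by
        rw [sub_smul, ← hzero i, hA, Matrix.mul_smul, Matrix.mul_one, neg_smul]
        abel
      simpa [sub_eq_zero, eq_comm] using (smul_eq_zero_iff_left hi).1 hci
  · rintro ⟨s, hs⟩
    obtain ⟨rfl, rfl⟩ := Prod.ext_iff.1 hs.symm
    ext1 i
    simp [infinitesimalGauge_apply]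

theorem finrank_range_infinitesimalGauge {P : Config n} (hrank : ∀ i, (P i).rank = 3) {a b : Fin n}
    (hab : fund (P a) (P b) 2 2 ≠ 0) :
    Module.finrank ℂ (infinitesimalGauge P).range = n + 15 := by
  have hsum := (infinitesimalGauge P).finrank_range_add_finrank_ker
  have hone : ((-1, fun _ => 1) : Matrix (Fin 4) (Fin 4) ℂ × (Fin n → ℂ)) ≠ 0 := by
    simp [Prod.ext_iff]
  rw [ker_infinitesimalGauge hrank hab, finrank_span_singleton hone, Module.finrank_prod,
    Module.finrank_matrix, Module.finrank_fin_fun, Fintype.card_fin, Module.finrank_self] at hsum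
  omega

theorem isInfinitesimallyRigid_iff_finrank {G : SimpleGraph (Fin n)} {P : Config n}
    (hrank : ∀ i, (P i).rank = 3) {a b : Fin n} (hab : fund (P a) (P b) 2 2 ≠ 0) :
    IsInfinitesimallyRigid G P ↔
      Module.finrank ℂ (infinitesimalSolutions G P) = n + 15 := by
  rw [← finrank_range_infinitesimalGauge hrank hab]
  refine ⟨fun h => ?_, fun h => ?_⟩
  · rw [h.antisymm (range_infinitesimalGauge_le G P)]
  · exact (Submodule.eq_of_le_of_finrank_eq (range_infinitesimalGauge_le G P) h.symm).ge

theorem IsInfinitesimallyRigid.of_smul {G : SimpleGraph (Fin n)} {P : Config n} {c : Fin n → ℂ}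
    (hc : ∀ i, c i ≠ 0) (h : IsInfinitesimallyRigid G fun i => c i • P i) :
    IsInfinitesimallyRigid G P := by
  intro H hH
  obtain ⟨⟨A, d⟩, hA⟩ := h (x := fun i => c i • H i) (mem_infinitesimalSolutions.2 fun i j hij => by
    obtain ⟨s, hs⟩ := mem_infinitesimalSolutions.1 hH i j hij
    exact ⟨s, by rw [fundDeriv_smul, fund_smul, hs, smul_comm]⟩)
  refine ⟨(A, d), funext fun i => ?_⟩
  have hi : c i • (P i * A + d i • P i) = c i • H i := by
    rw [← congrFun hA i, infinitesimalGauge_apply, Matrix.smul_mul, smul_add, smul_comm (d i)]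
  exact smul_right_injective _ (hc i) hi

theorem range_fderiv_Faff_comp_subtype {G : SimpleGraph (Fin n)} {P : Config n}
    (hP : P ∈ chartDomain G) :
    ((fderiv ℂ (Faff G) P).toLinearMap ∘ₗ (chartDirections n).subtype).range =
      (fderiv ℂ (Faff G) P).toLinearMap.range := by
  rw [LinearMap.range_comp, Submodule.range_subtype]
  refine Submodule.map_eq_range_iff.2 (codisjoint_iff.2 (Submodule.eq_top_iff'.2 fun H => ?_))
  have hgauge : infinitesimalGauge P (0, fun i => H i 2 3) ∈
      (fderiv ℂ (Faff G) P).toLinearMap.ker := by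
    rw [ker_fderiv_Faff hP.2.2]
    exact range_infinitesimalGauge_le G P ⟨_, rfl⟩
  have hchart : H - infinitesimalGauge P (0, fun i => H i 2 3) ∈ chartDirections n := by
    intro i
    simp [infinitesimalGauge_apply, hP.1 i]
  rw [← sub_add_cancel H (infinitesimalGauge P (0, fun i => H i 2 3))]
  exact Submodule.add_mem_sup hchart hgauge

theorem finrank_config : Module.finrank ℂ (Config n) = 12 * n := by
  rw [Module.finrank_pi_fintype]
  simp [Module.finrank_matrix, mul_comm]

theorem rank_fderiv_Faff {G : SimpleGraph (Fin n)} {P : Config n} (hP : P ∈ chartDomain G) :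
    LinearMap.rank ((fderiv ℂ (Faff G) P).toLinearMap ∘ₗ (chartDirections n).subtype) =
      (12 * n - Module.finrank ℂ (infinitesimalSolutions G P) : ℕ) := by
  rw [LinearMap.rank, range_fderiv_Faff_comp_subtype hP, ← Module.finrank_eq_rank,
    ← ker_fderiv_Faff hP.2.2, ← finrank_config,
    ← LinearMap.finrank_range_add_finrank_ker (fderiv ℂ (Faff G) P).toLinearMap, Nat.add_sub_cancel]

theorem rank_fderiv_Faff_eq_iff {G : SimpleGraph (Fin n)} (hn : 2 ≤ n) {a b : Fin n}
    (hab : G.Adj a b) {P : Config n} (hP : P ∈ chartDomain G) :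
    LinearMap.rank ((fderiv ℂ (Faff G) P).toLinearMap ∘ₗ (chartDirections n).subtype) =
      (11 * n - 15 : ℕ) ↔ IsInfinitesimallyRigid G P := by
  have hle := Submodule.finrank_le (infinitesimalSolutions G P)
  rw [finrank_config] at hle
  rw [isInfinitesimallyRigid_iff_finrank hP.2.1 (hP.2.2 a b hab), rank_fderiv_Faff hP,
    Nat.cast_inj]
  omega

theorem rank_fderiv_Faff_bot {P : Config n} (hP : P ∈ chartDomain ⊥) :
    LinearMap.rank ((fderiv ℂ (Faff ⊥) P).toLinearMap ∘ₗ (chartDirections n).subtype) = 0 := by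
  have htop : infinitesimalSolutions ⊥ P = ⊤ :=
    Submodule.eq_top_iff'.2 fun H => mem_infinitesimalSolutions.2 fun _ _ h => h.elim
  rw [rank_fderiv_Faff hP, htop, finrank_top, finrank_config, Nat.sub_self, Nat.cast_zero]

end InfinitesimalRigidity

section ProjectiveEquivalence

variable {n : ℕ} {G : SimpleGraph (Fin n)} {P Q Q' : Config n}

theorem ProjEquiv.symm (h : ProjEquiv Q Q') : ProjEquiv Q' Q := by
  obtain ⟨H, hH, c, hc, h⟩ := h
  refine ⟨H⁻¹, isUnit_nonsing_inv_iff.2 hH, c⁻¹, fun i => inv_ne_zero (hc i), fun i => ?_⟩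
  rw [h, Matrix.smul_mul, mul_nonsing_inv_cancel_right _ _ ((isUnit_iff_isUnit_det _).1 hH),
    Pi.inv_apply, inv_smul_smul₀ (hc i)]

theorem ProjEquiv.trans {Q'' : Config n} (h : ProjEquiv Q Q') (h' : ProjEquiv Q' Q'') :
    ProjEquiv Q Q'' := by
  obtain ⟨H, hH, c, hc, h⟩ := h
  obtain ⟨H', hH', c', hc', h'⟩ := h'
  refine ⟨H * H', hH.mul hH', c' * c, fun i => mul_ne_zero (hc' i) (hc i), fun i => ?_⟩
  rw [h', h, Matrix.smul_mul, smul_smul, Matrix.mul_assoc, Pi.mul_apply]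

theorem mem_solutionSet_of_projEquiv (hQ : Q ∈ SolutionSet G P) (h : ProjEquiv Q Q') :
    Q' ∈ SolutionSet G P := by
  obtain ⟨H, hH, c, hc, h⟩ := h
  have hdet := (isUnit_iff_isUnit_det _).1 hH
  refine ⟨fun i => ?_, fun i j hij => ?_⟩
  · rw [h, rank_smul_of_mem_nonZeroDivisors _ (mem_nonZeroDivisors_of_ne_zero (hc i)),
      rank_mul_eq_left_of_isUnit_det _ _ hdet, hQ.1 i]
  · obtain ⟨μ, hμ, hfund⟩ := hQ.2 i j hij
    refine ⟨c i ^ 2 * c j ^ 2 * H.det * μ, ?_, ?_⟩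
    · simp [hc i, hc j, hdet.ne_zero, hμ]
    · rw [h, h, fund_smul, fund_mul, hfund, smul_smul, smul_smul]

theorem mem_solutionSet_of_forall_edgeIdx (hQ : ∀ i, (Q i).rank = 3)
    (h : ∀ e : EdgeIdx G, ∃ μ : ℂ, μ ≠ 0 ∧
      fund (Q e.1.1) (Q e.1.2) = μ • fund (P e.1.1) (P e.1.2)) :
    Q ∈ SolutionSet G P := by
  refine ⟨hQ, (forall_adj_iff_forall_edgeIdx fun i j ⟨μ, hμ, hfund⟩ => ⟨μ, hμ, ?_⟩).2 h⟩
  rw [fund_swap, hfund, transpose_smul, ← fund_swap]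

/-- The solutions of `P` form a finite union of projective classes; this is the condition that
`FiniteSolvable` imposes on a generic configuration. -/
def HasFinitelyManySolutions (G : SimpleGraph (Fin n)) (P : Config n) : Prop :=
  ∃ T : Set (Config n), T.Finite ∧ SolutionSet G P = {Q | ∃ Q' ∈ T, ProjEquiv Q Q'}

theorem finiteSolvable_iff_eventually_generic :
    FiniteSolvable G ↔
      ∀ᶠ x in generic (Fin n × Fin 3 × Fin 4) ℂ, HasFinitelyManySolutions G (cameras x) :=
  ⟨fun ⟨g, hg, h⟩ => ⟨g, hg, fun x => h (cameras x)⟩,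
    fun ⟨g, hg, h⟩ => ⟨g, hg, fun P => h (entries P)⟩⟩

theorem ProjEquiv.eq_of_pinned (h : ProjEquiv Q Q') {a b : Fin n} (hrank : (Q a).rank = 3)
    (hab : fund (Q a) (Q b) 2 2 ≠ 0) (ha : Q' a = Q a) (hb : Q' b = Q b)
    (hpin : ∀ i, ∃ r c, Q' i r c = Q i r c ∧ Q i r c ≠ 0) : Q' = Q := by
  obtain ⟨H, -, s, hs, h⟩ := h
  have hfix {i : Fin n} (hi : Q' i = Q i) : Q i * H + -(s i)⁻¹ • Q i = 0 := by
    rw [neg_smul, ← sub_eq_add_neg, sub_eq_zero, eq_inv_smul_iff₀ (hs i), ← h, hi]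
  obtain ⟨hscalar, -⟩ := eq_of_infinitesimal_gauge_eq_zero hrank hab (hfix ha) (hfix hb)
  ext1 i
  obtain ⟨r, c, heq, hne⟩ := hpin i
  have hi : Q' i = (s i * (s a)⁻¹) • Q i := by
    rw [h, hscalar, neg_neg, Matrix.mul_smul, Matrix.mul_one, smul_smul]
  have hone : s i * (s a)⁻¹ = 1 := by
    rw [hi, Matrix.smul_apply, smul_eq_mul] at heq
    exact mul_right_cancel₀ hne (heq.trans (one_mul _).symm)
  rw [hi, hone, one_smul]

end ProjectiveEquivalence

section PinnedMap

open MvPolynomial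

variable {n : ℕ} {G : SimpleGraph (Fin n)}

/-- The polynomial system cutting out the solutions of a configuration, in the camera entries and
one unknown scale per edge: the scaled fundamental matrices along the edges of `G`, together with
the camera entries in `S`. Prescribing the latter removes the gauge freedom. -/
noncomputable def pinnedMap (G : SimpleGraph (Fin n)) (S : Set (Fin n × Fin 3 × Fin 4)) :
    (EdgeIdx G × Fin 3 × Fin 3) ⊕ S → MvPolynomial ((Fin n × Fin 3 × Fin 4) ⊕ EdgeIdx G) ℂ :=
  Sum.elim
    (fun w => X (Sum.inr w.1) * fund (cameras (fun v => X (Sum.inl v)) w.1.1.1)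
      (cameras (fun v => X (Sum.inl v)) w.1.1.2) w.2.1 w.2.2)
    fun v => X (Sum.inl v)

theorem eval_pinnedMap_inl (S : Set (Fin n × Fin 3 × Fin 4)) (Q : Config n) (s : EdgeIdx G → ℂ)
    (e : EdgeIdx G) (h k : Fin 3) :
    eval (Sum.elim (entries Q) s) (pinnedMap G S (Sum.inl (e, h, k))) =
      s e * fund (Q e.1.1) (Q e.1.2) h k := by
  have hQ : polyMap (fun v => X (Sum.inl v)) (Sum.elim (entries Q) s) = entries Q := by
    ext v
    simp [polyMap]
  rw [pinnedMap, Sum.elim_inl, map_mul, eval_X, eval_fund_cameras, hQ, cameras_entries,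
    Sum.elim_inr]

theorem exists_sumElim_entries_eq (y : (Fin n × Fin 3 × Fin 4) ⊕ EdgeIdx G → ℂ) :
    ∃ (Q : Config n) (s : EdgeIdx G → ℂ), Sum.elim (entries Q) s = y :=
  ⟨cameras (y ∘ Sum.inl), y ∘ Sum.inr, Sum.elim_comp_inl_inr y⟩

theorem polyMap_pinnedMap_eq_iff {S : Set (Fin n × Fin 3 × Fin 4)} {Q P : Config n}
    {s t : EdgeIdx G → ℂ} :
    polyMap (pinnedMap G S) (Sum.elim (entries Q) s) =
        polyMap (pinnedMap G S) (Sum.elim (entries P) t) ↔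
      (∀ e : EdgeIdx G, s e • fund (Q e.1.1) (Q e.1.2) = t e • fund (P e.1.1) (P e.1.2)) ∧
        Set.EqOn (entries Q) (entries P) S := by
  simp only [_root_.funext_iff, Sum.forall, Prod.forall, ← Matrix.ext_iff, polyMap,
    eval_pinnedMap_inl, Matrix.smul_apply, smul_eq_mul]
  simp [pinnedMap, Set.EqOn]

theorem jacobian_pinnedMap_mulVec_eq_zero_iff [Fintype (EdgeIdx G)]
    {S : Set (Fin n × Fin 3 × Fin 4)} {P H : Config n}
    {s u : EdgeIdx G → ℂ} :
    jacobian (pinnedMap G S) (Sum.elim (entries P) s) *ᵥ Sum.elim (entries H) u = 0 ↔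
      (∀ e : EdgeIdx G, u e • fund (P e.1.1) (P e.1.2) +
        s e • fundDeriv (P e.1.1) (P e.1.2) (H e.1.1, H e.1.2) = 0) ∧
          Set.EqOn (entries H) (entries 0) S := by
  have hline (t : ℂ) : Sum.elim (entries P) s + t • Sum.elim (entries H) u =
      Sum.elim (entries (P + t • H)) (s + t • u) := by
    ext (v | e) <;> rfl
  have hedge (e : EdgeIdx G) (h k : Fin 3) :
      (jacobian (pinnedMap G S) (Sum.elim (entries P) s) *ᵥ Sum.elim (entries H) u)
        (Sum.inl (e, h, k)) = u e * fund (P e.1.1) (P e.1.2) h k +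
          s e * fundDeriv (P e.1.1) (P e.1.2) (H e.1.1, H e.1.2) h k := by
    refine jacobian_mulVec_apply_of_hasDerivAt _ ?_
    simp only [hline, eval_pinnedMap_inl]
    have hs : HasDerivAt (fun t : ℂ => s e + t * u e) (u e) 0 := by
      simpa using ((hasDerivAt_id (0 : ℂ)).mul_const (u e)).const_add (s e)
    simpa using hs.fun_mul (hasDerivAt_fund (P e.1.1) (P e.1.2) (H e.1.1) (H e.1.2) h k)
  have hpin (v : S) : (jacobian (pinnedMap G S) (Sum.elim (entries P) s) *ᵥ
      Sum.elim (entries H) u) (Sum.inr v) = entries H v := by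
    refine jacobian_mulVec_apply_of_hasDerivAt _ ?_
    simpa [hline, pinnedMap, entries] using
      ((hasDerivAt_id (0 : ℂ)).mul_const (entries H v)).const_add (entries P v)
  simp only [_root_.funext_iff, Sum.forall, Prod.forall, hedge, hpin, ← Matrix.ext_iff, Set.EqOn]
  simp [entries]

/-- The entries pinned to remove the gauge freedom: all entries of the cameras `a` and `b`, which
leaves only the scales of the other cameras, and the entry `κ i` of each camera `i`. -/
def pins (a b : Fin n) (κ : Fin n → Fin 3 × Fin 4) : Set (Fin n × Fin 3 × Fin 4) :=
  {v | v.1 = a ∨ v.1 = b ∨ v.2 = κ v.1}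

theorem eqOn_pins_iff {a b : Fin n} {κ : Fin n → Fin 3 × Fin 4} {Q P : Config n} :
    Set.EqOn (entries Q) (entries P) (pins a b κ) ↔
      Q a = P a ∧ Q b = P b ∧ ∀ i, Q i (κ i).1 (κ i).2 = P i (κ i).1 (κ i).2 := by
  refine ⟨fun h => ⟨?_, ?_, fun i => h (x := (i, κ i)) (Or.inr (Or.inr rfl))⟩, ?_⟩
  · ext r c
    exact h (x := (a, r, c)) (Or.inl rfl)
  · ext r c
    exact h (x := (b, r, c)) (Or.inr (Or.inl rfl))
  · rintro ⟨ha, hb, hκ⟩ ⟨i, w⟩ (rfl | rfl | rfl : i = a ∨ i = b ∨ w = κ i)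
    · exact congrFun (congrFun ha w.1) w.2
    · exact congrFun (congrFun hb w.1) w.2
    · exact hκ i

/-- The nondegeneracy conditions under which the pinned system detects infinitesimal rigidity. -/
structure IsNondegenerate (G : SimpleGraph (Fin n)) (P : Config n) : Prop where
  entry_ne_zero : ∀ i r c, P i r c ≠ 0
  rank_eq : ∀ i, (P i).rank = 3
  fund_ne_zero : ∀ i j, G.Adj i j → fund (P i) (P j) 2 2 ≠ 0

section Jacobian

variable [Fintype (EdgeIdx G)] {a b : Fin n} {κ : Fin n → Fin 3 × Fin 4} {P : Config n}
  {s : EdgeIdx G → ℂ}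

theorem IsInfinitesimallyRigid.injective_jacobian_pinnedMap (h : IsInfinitesimallyRigid G P)
    (hP : IsNondegenerate G P) (hs : ∀ e, s e ≠ 0) (hab : G.Adj a b) :
    Function.Injective
      (jacobian (pinnedMap G (pins a b κ)) (Sum.elim (entries P) s)).mulVec := by
  refine (injective_iff_map_eq_zero (jacobian (pinnedMap G (pins a b κ))
    (Sum.elim (entries P) s)).mulVecLin).2 fun x hx => ?_
  obtain ⟨H, u, rfl⟩ := exists_sumElim_entries_eq x
  obtain ⟨hedge, hpins⟩ := jacobian_pinnedMap_mulVec_eq_zero_iff.1 hx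
  obtain ⟨ha, hb, hκ⟩ := eqOn_pins_iff.1 hpins
  have hH : H ∈ infinitesimalSolutions G P :=
    mem_infinitesimalSolutions_iff_forall_edgeIdx.2 fun e => ⟨-((s e)⁻¹ * u e), by
      rw [neg_smul, mul_smul, ← smul_neg, eq_inv_smul_iff₀ (hs e), eq_neg_iff_add_eq_zero,
        add_comm, hedge e]⟩
  obtain ⟨⟨A, c⟩, rfl⟩ := h hH
  obtain ⟨hA, -⟩ : A = -c a • 1 ∧ c a = c b :=
    eq_of_infinitesimal_gauge_eq_zero (hP.rank_eq a) (hP.fund_ne_zero a b hab) ha hb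
  have hscale (i : Fin n) : infinitesimalGauge P (A, c) i = (c i - c a) • P i := by
    rw [infinitesimalGauge_apply, hA, Matrix.mul_smul, Matrix.mul_one, neg_smul, sub_smul,
      neg_add_eq_sub]
  have hH0 : infinitesimalGauge P (A, c) = 0 := by
    ext1 i
    have hi : (c i - c a) * P i (κ i).1 (κ i).2 = 0 := by
      rw [← smul_eq_mul, ← Matrix.smul_apply, ← hscale]
      exact hκ i
    rw [hscale, (mul_eq_zero_iff_right (hP.entry_ne_zero i _ _)).1 hi, zero_smul, Pi.zero_apply]
  have hu (e : EdgeIdx G) : u e = 0 := by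
    have he := congrFun (congrFun (hedge e) 2) 2
    simpa [hH0, Prod.mk_zero_zero, hP.fund_ne_zero _ _ e.2.1] using he
  ext (v | e)
  · exact congrFun (congrFun (congrFun hH0 v.1) v.2.1) v.2.2
  · exact hu e

theorem isInfinitesimallyRigid_of_injective_jacobian (hP : IsNondegenerate G P) (hab : G.Adj a b)
    (h : Function.Injective
      (jacobian (pinnedMap G (pins a b κ)) (Sum.elim (entries P) s)).mulVec) :
    IsInfinitesimallyRigid G P := by
  intro H hH
  obtain ⟨t, ht⟩ := mem_infinitesimalSolutions.1 hH a b hab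
  obtain ⟨A, β, hA, hB⟩ := exists_infinitesimal_gauge_of_fundDeriv_eq_smul (hP.rank_eq a)
    (hP.rank_eq b) (hP.fund_ne_zero a b hab) ht
  let c (i : Fin n) : ℂ := (H i - P i * A) (κ i).1 (κ i).2 / P i (κ i).1 (κ i).2
  have hgauge (i : Fin n) {γ : ℂ} (hi : H i = P i * A + γ • P i) :
      H i - infinitesimalGauge P (A, c) i = 0 := by
    have hci : c i = γ := by
      simp [c, hi, mul_div_cancel_right₀ _ (hP.entry_ne_zero i _ _)]
    rw [infinitesimalGauge_apply, hci, hi, sub_self]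
  have hpins : Set.EqOn (entries (H - infinitesimalGauge P (A, c)))
      (entries 0) (pins a b κ) := by
    refine eqOn_pins_iff.2 ⟨hgauge a (γ := 0) (by simpa using hA), hgauge b hB, fun i => ?_⟩
    simp [infinitesimalGauge_apply, c, hP.entry_ne_zero]
  choose d hd using mem_infinitesimalSolutions_iff_forall_edgeIdx.1
    (sub_mem hH (range_infinitesimalGauge_le G P ⟨(A, c), rfl⟩))
  have hker := jacobian_pinnedMap_mulVec_eq_zero_iff (s := s) (u := fun e => -(s e * d e)) |>.2
    ⟨fun e => by rw [hd, smul_smul, neg_smul, neg_add_cancel], hpins⟩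
  refine ⟨(A, c), (sub_eq_zero.1 (funext fun i => Matrix.ext fun r k => ?_)).symm⟩
  exact congrFun (h (hker.trans (mulVec_zero _).symm)) (Sum.inl (i, r, k))

end Jacobian

end PinnedMap

section Nondegenerate

open MvPolynomial Filter

variable {n : ℕ} {G : SimpleGraph (Fin n)} {P : Config n}

theorem rank_eq_card_of_det_submatrix_ne_zero {m k K : Type*} [Fintype m] [DecidableEq m]
    [Fintype k] [Field K] {A : Matrix m k K} {f : m → k} (h : (A.submatrix id f).det ≠ 0) :
    A.rank = Fintype.card m := by
  refine (rank_eq_card_iff_vecMul_injective A).2 (Function.Injective.of_comp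
    (f := fun x : k → K => x ∘ f) ?_)
  exact vecMul_injective_iff_isUnit.2 ((isUnit_iff_isUnit_det _).2 h.isUnit)

theorem IsNondegenerate.smul (hP : IsNondegenerate G P) {c : Fin n → ℂ} (hc : ∀ i, c i ≠ 0) :
    IsNondegenerate G fun i => c i • P i where
  entry_ne_zero i r k := mul_ne_zero (hc i) (hP.entry_ne_zero i r k)
  rank_eq i := by
    rw [rank_smul_of_mem_nonZeroDivisors _ (mem_nonZeroDivisors_of_ne_zero (hc i)), hP.rank_eq]
  fund_ne_zero i j hij := by
    simp [fund_smul, hc, hP.fund_ne_zero i j hij]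

section ChartParametrization

variable {τ : Type*} {θ : Fin n × Fin 3 × Fin 4 → MvPolynomial τ ℂ}

/-- A polynomial parametrization of configurations whose image contains every chart configuration.
This covers both the space of all configurations and the chart itself, and suffices for a condition
that holds at some chart configuration to hold generically. -/
def CoversChart (θ : Fin n × Fin 3 × Fin 4 → MvPolynomial τ ℂ) : Prop :=
  ∀ P : Config n, (∀ i, P i 2 3 = 1) → ∃ y, polyMap θ y = entries P

theorem coversChart_X : CoversChart (X : Fin n × Fin 3 × Fin 4 → MvPolynomial _ ℂ) :=
  fun P _ => ⟨entries P, polyMap_X _⟩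

theorem eventually_generic_eval_ne_zero_of_chart (hθ : CoversChart θ) (hP : ∀ i, P i 2 3 = 1)
    {g : MvPolynomial (Fin n × Fin 3 × Fin 4) ℂ} (hg : eval (entries P) g ≠ 0) :
    ∀ᶠ y in generic τ ℂ, eval (polyMap θ y) g ≠ 0 := by
  obtain ⟨y₀, hy₀⟩ := hθ P hP
  exact eventually_generic_eval_polyMap_ne_zero θ (y₀ := y₀) (by rwa [hy₀])

theorem eventually_generic_entry_ne_zero (hθ : CoversChart θ) (v : Fin n × Fin 3 × Fin 4) :
    ∀ᶠ y in generic τ ℂ, polyMap θ y v ≠ 0 := by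
  have hone : eval (entries (fun _ => of fun _ _ => 1 : Config n)) (X v) ≠ 0 := by
    simp [entries]
  simpa only [eval_X] using eventually_generic_eval_ne_zero_of_chart hθ (fun _ => rfl) hone

theorem eventually_generic_rank_eq (hθ : CoversChart θ) (i : Fin n) :
    ∀ᶠ y in generic τ ℂ, (cameras (polyMap θ y) i).rank = 3 := by
  have hdet (x : Fin n × Fin 3 × Fin 4 → ℂ) :
      eval x ((cameras X i).submatrix id Fin.castSucc).det =
        ((cameras x i).submatrix id Fin.castSucc).det := by
    rw [RingHom.map_det]
    congr 1
    ext r c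
    exact eval_X _
  have hone : eval (entries (fun _ => canonicalLeft ![0, 0, 1, 1] : Config n))
      ((cameras X i).submatrix id Fin.castSucc).det ≠ 0 := by
    rw [hdet, cameras_entries]
    simp [canonicalLeft, det_fin_three]
  filter_upwards [eventually_generic_eval_ne_zero_of_chart hθ (fun _ => rfl) hone] with y hy
  rw [hdet] at hy
  exact rank_eq_card_of_det_submatrix_ne_zero hy

theorem eventually_generic_fund_ne_zero (hθ : CoversChart θ) {i j : Fin n} (hij : i ≠ j) :
    ∀ᶠ y in generic τ ℂ, fund (cameras (polyMap θ y) i) (cameras (polyMap θ y) j) 2 2 ≠ 0 := by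
  let P : Config n :=
    fun l => if l = i then canonicalLeft ![0, 0, 0, 1] else canonicalRight ![0, 0, 0, 1]
  have hP (l : Fin n) : P l 2 3 = 1 := by
    unfold P
    split_ifs <;> rfl
  have hone : eval (entries P) (fund (cameras X i) (cameras X j) 2 2) ≠ 0 := by
    simp [eval_fund_cameras, polyMap_X, cameras_entries, P, hij.symm, fund_canonical]
  simpa only [eval_fund_cameras, polyMap_X] using
    eventually_generic_eval_ne_zero_of_chart hθ hP hone

theorem eventually_generic_isNondegenerate (hθ : CoversChart θ) (G : SimpleGraph (Fin n)) :
    ∀ᶠ y in generic τ ℂ, IsNondegenerate G (cameras (polyMap θ y)) := by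
  filter_upwards [eventually_all.2 fun v => eventually_generic_entry_ne_zero hθ v,
    eventually_all.2 fun i => eventually_generic_rank_eq hθ i,
    eventually_all.2 fun i => eventually_all.2 fun j => eventually_imp_distrib_left.2
      fun hij : G.Adj i j => eventually_generic_fund_ne_zero hθ hij.ne] with y hentry hrank hfund
  exact ⟨fun i r c => hentry (i, r, c), hrank, hfund⟩

end ChartParametrization

end Nondegenerate

section FiniteSolvable

open MvPolynomial Filter

variable {n : ℕ} {G : SimpleGraph (Fin n)} {P Q : Config n} {a b : Fin n}

theorem exists_projEquiv_eqOn_pins (hP : IsNondegenerate G P) (hab : G.Adj a b)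
    (hQ : Q ∈ SolutionSet G P) :
    ∃ (Q' : Config n) (κ : Fin n → Fin 3 × Fin 4), ProjEquiv Q Q' ∧
      Set.EqOn (entries Q') (entries P) (pins a b κ) := by
  obtain ⟨μ, hμ, hfund⟩ := hQ.2 a b hab
  obtain ⟨B, β, hB, hβ, ha, hb⟩ := exists_gauge_of_fund_eq_smul (hP.rank_eq a) (hP.rank_eq b)
    (hP.fund_ne_zero a b hab) hμ hfund
  have hdet := (isUnit_iff_isUnit_det _).1 hB
  have hne (i : Fin n) : ∃ w : Fin 3 × Fin 4, (Q i * B⁻¹) w.1 w.2 ≠ 0 := by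
    by_contra! h
    have hzero : Q i * B⁻¹ = 0 := Matrix.ext fun r c => h (r, c)
    have hrank := hQ.1 i
    rw [← rank_mul_eq_left_of_isUnit_det B⁻¹ (Q i) (isUnit_nonsing_inv_det B hdet), hzero] at hrank
    simp at hrank
  choose κ hκ using hne
  let c (i : Fin n) : ℂ := P i (κ i).1 (κ i).2 / (Q i * B⁻¹) (κ i).1 (κ i).2
  have hgauge (i : Fin n) {γ : ℂ} (hγ : γ ≠ 0) (hi : Q i = γ • (P i * B)) :
      c i • (Q i * B⁻¹) = P i := by
    have hQB : Q i * B⁻¹ = γ • P i := by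
      rw [hi, Matrix.smul_mul, mul_nonsing_inv_cancel_right _ _ hdet]
    have hc : c i = γ⁻¹ := by
      simp [c, hQB, div_mul_cancel_right₀ (hP.entry_ne_zero i _ _)]
    rw [hc, hQB, inv_smul_smul₀ hγ]
  refine ⟨fun i => c i • (Q i * B⁻¹), κ, ⟨B⁻¹, isUnit_nonsing_inv_iff.2 hB, c,
    fun i => div_ne_zero (hP.entry_ne_zero i _ _) (hκ i), fun _ => rfl⟩,
    eqOn_pins_iff.2 ⟨?_, ?_, ?_⟩⟩
  · exact hgauge a one_ne_zero (by rwa [one_smul])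
  · exact hgauge b hβ hb
  · exact fun i => div_mul_cancel₀ _ (hκ i)

theorem hasFinitelyManySolutions_of_finite_fibre (hP : IsNondegenerate G P) (hab : G.Adj a b)
    {t : EdgeIdx G → ℂ} (hfin : ∀ κ, {y | polyMap (pinnedMap G (pins a b κ)) y =
      polyMap (pinnedMap G (pins a b κ)) (Sum.elim (entries P) t)}.Finite) :
    HasFinitelyManySolutions G P := by
  refine ⟨SolutionSet G P ∩ ⋃ κ, (fun y => cameras (y ∘ Sum.inl)) ''
    {y | polyMap (pinnedMap G (pins a b κ)) y =
      polyMap (pinnedMap G (pins a b κ)) (Sum.elim (entries P) t)},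
    (Set.finite_iUnion fun κ => (hfin κ).image _).inter_of_right _, Set.Subset.antisymm ?_ ?_⟩
  · intro Q hQ
    obtain ⟨Q', κ, hQQ', hpins⟩ := exists_projEquiv_eqOn_pins hP hab hQ
    have hQ' := mem_solutionSet_of_projEquiv hQ hQQ'
    choose μ hμ hfund using fun e : EdgeIdx G => hQ'.2 e.1.1 e.1.2 e.2.1
    refine ⟨Q', ⟨hQ', Set.mem_iUnion.2 ⟨κ, Sum.elim (entries Q') fun e => t e * (μ e)⁻¹,
      polyMap_pinnedMap_eq_iff.2 ⟨fun e => ?_, hpins⟩, rfl⟩⟩, hQQ'⟩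
    rw [hfund, smul_smul, inv_mul_cancel_right₀ (hμ e)]
  · rintro Q ⟨Q', ⟨hQ', -⟩, hQQ'⟩
    exact mem_solutionSet_of_projEquiv hQ' hQQ'.symm

theorem finiteSolvable_of_isInfinitesimallyRigid (hP : IsNondegenerate G P) (hab : G.Adj a b)
    (h : IsInfinitesimallyRigid G P) : FiniteSolvable G := by
  have := Fintype.ofFinite (EdgeIdx G)
  have hfin : ∀ᶠ x in generic ((Fin n × Fin 3 × Fin 4) ⊕ EdgeIdx G) ℂ,
      ∀ κ, {y | polyMap (pinnedMap G (pins a b κ)) y =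
        polyMap (pinnedMap G (pins a b κ)) x}.Finite :=
    eventually_all.2 fun κ => eventually_generic_finite_fibre
      (h.injective_jacobian_pinnedMap (s := 1) hP (fun _ => one_ne_zero) hab)
  obtain ⟨t, ht⟩ := exists_eventually_generic_sumElim hfin
  refine finiteSolvable_iff_eventually_generic.2 ?_
  filter_upwards [ht, eventually_generic_isNondegenerate coversChart_X G] with x hfin hreg
  rw [polyMap_X] at hreg
  exact hasFinitelyManySolutions_of_finite_fibre hreg hab hfin

theorem eq_of_projEquiv_of_polyMap_pinnedMap_eq {κ : Fin n → Fin 3 × Fin 4}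
    {y z : (Fin n × Fin 3 × Fin 4) ⊕ EdgeIdx G → ℂ}
    (hy : IsNondegenerate G (cameras (y ∘ Sum.inl))) (hab : G.Adj a b)
    (h : ProjEquiv (cameras (y ∘ Sum.inl)) (cameras (z ∘ Sum.inl)))
    (hyz : polyMap (pinnedMap G (pins a b κ)) y = polyMap (pinnedMap G (pins a b κ)) z) :
    y = z := by
  obtain ⟨P, s, rfl⟩ := exists_sumElim_entries_eq y
  obtain ⟨Q, t, rfl⟩ := exists_sumElim_entries_eq z
  simp only [Sum.elim_comp_inl, cameras_entries] at hy h
  obtain ⟨hedge, hpins⟩ := polyMap_pinnedMap_eq_iff.1 hyz.symm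
  obtain ⟨ha, hb, hκ⟩ := eqOn_pins_iff.1 hpins
  obtain rfl : Q = P := h.eq_of_pinned (hy.rank_eq a) (hy.fund_ne_zero a b hab) ha hb
    fun i => ⟨_, _, hκ i, hy.entry_ne_zero i _ _⟩
  have hst : t = s := funext fun e =>
    mul_right_cancel₀ (hy.fund_ne_zero _ _ e.2.1) (congrFun (congrFun (hedge e) 2) 2)
  rw [hst]

theorem mem_solutionSet_of_polyMap_pinnedMap_eq {S : Set (Fin n × Fin 3 × Fin 4)}
    {s t : EdgeIdx G → ℂ} (hQ : ∀ i, (Q i).rank = 3) (hs : ∀ e, s e ≠ 0) (ht : ∀ e, t e ≠ 0)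
    (h : polyMap (pinnedMap G S) (Sum.elim (entries Q) s) =
      polyMap (pinnedMap G S) (Sum.elim (entries P) t)) :
    Q ∈ SolutionSet G P := by
  refine mem_solutionSet_of_forall_edgeIdx hQ fun e =>
    ⟨(s e)⁻¹ * t e, mul_ne_zero (inv_ne_zero (hs e)) (ht e), ?_⟩
  rw [mul_smul, eq_inv_smul_iff₀ (hs e)]
  exact (polyMap_pinnedMap_eq_iff.1 h).1 e

theorem finite_fibre_of_hasFinitelyManySolutions (κ : Fin n → Fin 3 × Fin 4) (hab : G.Adj a b)
    {t : EdgeIdx G → ℂ} (ht : ∀ e, t e ≠ 0) (hfin : HasFinitelyManySolutions G P) :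
    {y | (IsNondegenerate G (cameras (y ∘ Sum.inl)) ∧ ∀ e, y (Sum.inr e) ≠ 0) ∧
      polyMap (pinnedMap G (pins a b κ)) y =
        polyMap (pinnedMap G (pins a b κ)) (Sum.elim (entries P) t)}.Finite := by
  obtain ⟨T, hT, hsol⟩ := hfin
  refine (hT.biUnion (t := fun Q => {y | IsNondegenerate G (cameras (y ∘ Sum.inl)) ∧
    polyMap (pinnedMap G (pins a b κ)) y =
      polyMap (pinnedMap G (pins a b κ)) (Sum.elim (entries P) t) ∧
    ProjEquiv (cameras (y ∘ Sum.inl)) Q}) fun Q _ => Set.Subsingleton.finite ?_).subset ?_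
  · rintro y ⟨hy, hyt, hyQ⟩ z ⟨-, hzt, hzQ⟩
    exact eq_of_projEquiv_of_polyMap_pinnedMap_eq hy hab (hyQ.trans hzQ.symm)
      (hyt.trans hzt.symm)
  · rintro y ⟨⟨hy, hys⟩, hyt⟩
    have hmem : cameras (y ∘ Sum.inl) ∈ SolutionSet G P := by
      obtain ⟨Q, s, rfl⟩ := exists_sumElim_entries_eq y
      exact mem_solutionSet_of_polyMap_pinnedMap_eq hy.rank_eq hys ht hyt
    rw [hsol] at hmem
    obtain ⟨Q, hQ, hyQ⟩ := hmem
    exact Set.mem_biUnion hQ ⟨hy, hyt, hyQ⟩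

theorem exists_isInfinitesimallyRigid_of_finiteSolvable (h : FiniteSolvable G) (hab : G.Adj a b) :
    ∃ P, IsNondegenerate G P ∧ IsInfinitesimallyRigid G P := by
  have := Fintype.ofFinite (EdgeIdx G)
  by_contra! hflex
  let Φ := pinnedMap G (pins a b 0)
  have hreg := eventually_generic_isNondegenerate coversChart_X G
  simp only [polyMap_X] at hreg
  have hreg' := (tendsto_comp_generic (K := ℂ) (Sum.inl_injective (β := EdgeIdx G))).eventually hreg
  have hfin := (tendsto_comp_generic (K := ℂ) (Sum.inl_injective (β := EdgeIdx G))).eventually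
    (finiteSolvable_iff_eventually_generic.1 h)
  have hne : ∀ᶠ x in generic ((Fin n × Fin 3 × Fin 4) ⊕ EdgeIdx G) ℂ, ∀ e, x (Sum.inr e) ≠ 0 := by
    refine eventually_all.2 fun e => ?_
    simpa using eventually_generic_of_eval_ne_zero (g := X (Sum.inr e)) (x₀ := fun _ => 1) (by simp)
  have hnot (x₀) : ¬ Function.Injective (jacobian Φ x₀).mulVec := by
    intro hinj
    obtain ⟨x, hx, hreg⟩ := ((eventually_generic_injective_jacobian Φ X (y₀ := x₀)
      (by rwa [polyMap_X])).and hreg').exists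
    rw [polyMap_X, ← Sum.elim_comp_inl_inr x] at hx
    exact hflex _ hreg (isInfinitesimallyRigid_of_injective_jacobian hreg hab hx)
  obtain ⟨x, hx⟩ := exists_infinite_fibre_polyMap Φ hnot (hreg'.and (hne.and hfin))
  obtain ⟨y, ⟨hy, hys, hyfin⟩, hyx⟩ := hx.nonempty
  obtain ⟨Q, s, rfl⟩ := exists_sumElim_entries_eq y
  refine hx ((finite_fibre_of_hasFinitelyManySolutions 0 hab hys hyfin).subset ?_)
  exact fun z ⟨⟨hz, hzs, _⟩, hzx⟩ => ⟨⟨hz, hzs⟩, hzx.trans hyx.symm⟩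

end FiniteSolvable

section Chart

open MvPolynomial Filter

variable {n : ℕ} {G : SimpleGraph (Fin n)}

/-- The parametrization of the chart configurations by their free entries. -/
noncomputable def chartPoly (n : ℕ) (v : Fin n × Fin 3 × Fin 4) : MvPolynomial (FreeIdx n) ℂ :=
  if h : v.2 = (2, 3) then 1 else X (v.1, ⟨v.2, h⟩)

/-- The free entries of a configuration, that is, its coordinates in the chart. -/
def freeEntries (P : Config n) (v : FreeIdx n) : ℂ :=
  P v.1 v.2.1.1 v.2.1.2

theorem polyMap_chartPoly_freeEntries {P : Config n} (hP : ∀ i, P i 2 3 = 1) :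
    polyMap (chartPoly n) (freeEntries P) = entries P := by
  ext ⟨i, w⟩
  by_cases hw : w = (2, 3)
  · simp [polyMap, chartPoly, entries, hw, hP]
  · simp [polyMap, chartPoly, entries, hw, freeEntries]

theorem coversChart_chartPoly : CoversChart (chartPoly n) :=
  fun P hP => ⟨freeEntries P, polyMap_chartPoly_freeEntries hP⟩

/-- The chart configuration with given free entries. -/
noncomputable def chart (y : FreeIdx n → ℂ) : Config n :=
  cameras (polyMap (chartPoly n) y)

theorem chart_freeEntries {P : Config n} (hP : ∀ i, P i 2 3 = 1) : chart (freeEntries P) = P := by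
  rw [chart, polyMap_chartPoly_freeEntries hP, cameras_entries]

theorem freeEntries_chart (y : FreeIdx n → ℂ) : freeEntries (chart y) = y :=
  funext fun v => (congrArg (eval y) (dif_neg v.2.2)).trans (eval_X v)

theorem chart_two_three (y : FreeIdx n → ℂ) (i : Fin n) : chart y i 2 3 = 1 :=
  map_one (eval y)

theorem eventually_generic_isNondegenerate_chart (G : SimpleGraph (Fin n)) :
    ∀ᶠ y in generic (FreeIdx n) ℂ, IsNondegenerate G (chart y) :=
  eventually_generic_isNondegenerate coversChart_chartPoly G

theorem eventually_generic_chart_mem_chartDomain (G : SimpleGraph (Fin n)) :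
    ∀ᶠ y in generic (FreeIdx n) ℂ, chart y ∈ chartDomain G :=
  (eventually_generic_isNondegenerate_chart G).mono fun y hy =>
    ⟨chart_two_three y, hy.rank_eq, hy.fund_ne_zero⟩

theorem exists_forall_mem_chartDomain_iff_eventually_generic {p : Config n → Prop} :
    (∃ h : MvPolynomial (FreeIdx n) ℂ, h ≠ 0 ∧
      ∀ P ∈ chartDomain G, eval (fun v => P v.1 v.2.1.1 v.2.1.2) h ≠ 0 → p P) ↔
    ∀ᶠ y in generic (FreeIdx n) ℂ, p (chart y) := by
  constructor
  · rintro ⟨g, hg, hp⟩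
    filter_upwards [eventually_generic_chart_mem_chartDomain G,
      eventually_generic.2 ⟨g, hg, fun _ => id⟩] with y hy hgy
    rw [← freeEntries_chart y] at hgy
    exact hp _ hy hgy
  · rintro ⟨g, hg, hp⟩
    refine ⟨g, hg, fun P hP hgP => ?_⟩
    exact chart_freeEntries hP.1 ▸ hp (freeEntries P) hgP

variable {a b : Fin n}

theorem eventually_generic_isInfinitesimallyRigid_of_chart {P : Config n}
    (hP : IsNondegenerate G P) (hchart : ∀ i, P i 2 3 = 1) (hab : G.Adj a b)
    (h : IsInfinitesimallyRigid G P) :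
    ∀ᶠ y in generic (FreeIdx n) ℂ, IsInfinitesimallyRigid G (chart y) := by
  have := Fintype.ofFinite (EdgeIdx G)
  have hθ (y : FreeIdx n → ℂ) : polyMap (Sum.elim (chartPoly n) (1 : EdgeIdx G → _)) y =
      Sum.elim (polyMap (chartPoly n) y) 1 := by
    ext (v | e) <;> simp [polyMap]
  have hinj := eventually_generic_injective_jacobian (pinnedMap G (pins a b 0))
    (Sum.elim (chartPoly n) (1 : EdgeIdx G → _)) (y₀ := freeEntries P) (by
      rw [hθ, polyMap_chartPoly_freeEntries hchart]
      exact h.injective_jacobian_pinnedMap hP (fun _ => one_ne_zero) hab)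
  filter_upwards [hinj, eventually_generic_isNondegenerate_chart G] with y hy hreg
  rw [hθ] at hy
  exact isInfinitesimallyRigid_of_injective_jacobian hreg hab hy

theorem eventually_generic_isInfinitesimallyRigid {P : Config n} (hP : IsNondegenerate G P)
    (hab : G.Adj a b) (h : IsInfinitesimallyRigid G P) :
    ∀ᶠ y in generic (FreeIdx n) ℂ, IsInfinitesimallyRigid G (chart y) := by
  have hc (i : Fin n) : (P i 2 3)⁻¹ ≠ 0 := inv_ne_zero (hP.entry_ne_zero i 2 3)
  refine eventually_generic_isInfinitesimallyRigid_of_chart (hP.smul hc)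
    (fun i => inv_mul_cancel₀ (hP.entry_ne_zero i 2 3)) hab
    (.of_smul (c := fun i => P i 2 3) (fun i => hP.entry_ne_zero i 2 3) ?_)
  simpa only [smul_inv_smul₀ (hP.entry_ne_zero _ 2 3)] using h

theorem finiteSolvable_iff_eventually_generic_isInfinitesimallyRigid (hab : G.Adj a b) :
    FiniteSolvable G ↔ ∀ᶠ y in generic (FreeIdx n) ℂ, IsInfinitesimallyRigid G (chart y) := by
  constructor
  · intro h
    obtain ⟨P, hP, hrigid⟩ := exists_isInfinitesimallyRigid_of_finiteSolvable h hab
    exact eventually_generic_isInfinitesimallyRigid hP hab hrigid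
  · intro h
    obtain ⟨y, hrigid, hP⟩ :=
      (h.and (eventually_generic_isNondegenerate_chart G)).exists
    exact finiteSolvable_of_isInfinitesimallyRigid hP hab hrigid

end Chart

section Edgeless

variable {n : ℕ}

theorem ProjEquiv.exists_fund_eq_smul {Q Q' : Config n} (h : ProjEquiv Q Q') (a b : Fin n) :
    ∃ c : ℂ, fund (Q' a) (Q' b) = c • fund (Q a) (Q b) := by
  obtain ⟨H, -, s, -, h⟩ := h
  exact ⟨_, by rw [h, h, fund_smul, fund_mul, smul_smul]⟩

/-- Pairwise projectively inequivalent configurations, showing that infinitely many projective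
equivalence classes exist as soon as there are two cameras. -/
noncomputable def canonicalFamily (a : Fin n) (z : ℂ) (i : Fin n) : Matrix (Fin 3) (Fin 4) ℂ :=
  if i = a then canonicalLeft ![z, 0, 1, 0] else canonicalRight ![1, 0, 0, 0]

theorem rank_canonicalFamily (a : Fin n) (z : ℂ) (i : Fin n) :
    (canonicalFamily a z i).rank = 3 := by
  rw [canonicalFamily]
  split_ifs
  · exact rank_eq_card_of_det_submatrix_ne_zero (f := ![0, 1, 2])
      (by simp [canonicalLeft, det_fin_three])
  · exact rank_eq_card_of_det_submatrix_ne_zero (f := ![2, 3, 0])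
      (by simp [canonicalRight, det_fin_three])

theorem eq_of_projEquiv_canonicalFamily {a b : Fin n} (hab : a ≠ b) {z w : ℂ}
    (h : ProjEquiv (canonicalFamily a z) (canonicalFamily a w)) : z = w := by
  obtain ⟨c, hc⟩ := h.exists_fund_eq_smul a b
  simp only [canonicalFamily, if_true, if_neg hab.symm, fund_canonical] at hc
  have hone : 1 = c := by simpa using congrFun (congrFun hc 2) 2
  have hneg : -w = c * -z := by simpa using congrFun (congrFun hc 2) 0
  rw [← hone, one_mul, neg_inj] at hneg
  exact hneg.symm

theorem not_finiteSolvable_bot {a b : Fin n} (hab : a ≠ b) :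
    ¬ FiniteSolvable (⊥ : SimpleGraph (Fin n)) := by
  intro h
  obtain ⟨P, T, hT, hsol⟩ := (finiteSolvable_iff_eventually_generic.1 h).exists
  have hmem (z : ℂ) : ∃ Q : T, ProjEquiv (canonicalFamily a z) Q := by
    have hz : canonicalFamily a z ∈ SolutionSet ⊥ (cameras P) :=
      ⟨rank_canonicalFamily a z, fun _ _ h => h.elim⟩
    rw [hsol] at hz
    obtain ⟨Q, hQ, hzQ⟩ := hz
    exact ⟨⟨Q, hQ⟩, hzQ⟩
  choose f hf using hmem
  have := hT.to_subtype
  obtain ⟨z, w, hzw, heq⟩ := Finite.exists_ne_map_eq_of_infinite f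
  exact hzw (eq_of_projEquiv_canonicalFamily hab ((hf z).trans (heq ▸ (hf w).symm)))

end Edgeless

/-- the affine fundamental-matrix map `𝓕_G^aff` is differentiable at
every point of the chart domain `U`, and `G` is finite solvable if and only if,
for a generic configuration `P` in `U`, the derivative of `𝓕_G^aff` at `P`
(restricted to tuples whose `(3,4)` entries vanish) has rank `11n − 15`. -/
theorem finiteSolvable_iff_generic_rank_fderiv_Faff {n : ℕ} (hn : 2 ≤ n)
    (G : SimpleGraph (Fin n)) [DecidableRel G.Adj] :
    (∀ P ∈ chartDomain G, DifferentiableAt ℂ (Faff G) P) ∧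
      (FiniteSolvable G ↔
        ∃ h : MvPolynomial (FreeIdx n) ℂ, h ≠ 0 ∧
          ∀ P ∈ chartDomain G,
            MvPolynomial.eval (fun v => P v.1 v.2.1.1 v.2.1.2) h ≠ 0 →
            LinearMap.rank
                ((fderiv ℂ (Faff G) P).toLinearMap ∘ₗ
                  (chartDirections n).subtype) =
              (11 * n - 15 : ℕ)) := by
  refine ⟨fun P hP => differentiableAt_Faff hP.2.2, ?_⟩
  rw [exists_forall_mem_chartDomain_iff_eventually_generic]
  have hchart := eventually_generic_chart_mem_chartDomain G
  by_cases hG : ∃ a b, G.Adj a b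
  · obtain ⟨a, b, hab⟩ := hG
    rw [finiteSolvable_iff_eventually_generic_isInfinitesimallyRigid hab]
    exact Filter.eventually_congr (hchart.mono fun y hy => (rank_fderiv_Faff_eq_iff hn hab hy).symm)
  · obtain rfl : G = ⊥ := SimpleGraph.ext (by ext a b; simpa using fun h => hG ⟨a, b, h⟩)
    refine iff_of_false (not_finiteSolvable_bot (a := ⟨0, by lia⟩) (b := ⟨1, hn⟩) (by simp)) ?_
    intro hrank
    obtain ⟨y, hy, hmem⟩ := (hrank.and hchart).exists
    rw [rank_fderiv_Faff_bot hmem, eq_comm, Nat.cast_eq_zero] at hy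
    lia
end

section
/- Let P_i and P_j be real 3×4 matrices of rank 3 with distinct centers. Then a real 3×3 matrix F satisfies F ≠ 0 and P_jᵀ F P_i + P_iᵀ Fᵀ P_j = 0 (i.e., P_jᵀ F P_i is skew-symmetric) if and only if F = λ · 𝓕(P_i, P_j) for some nonzero real number λ. -/
/-!
Expanding a determinant along its last two columns gives
`v ⬝ᵥ fund P Q *ᵥ u = det [P u 0; Q 0 v]`, and this vanishes exactly when some nonzero `(x, s, t)`
satisfies `P x = s u` and `Q x = t v`. With `u = P x`, `v = Q x` this shows that the form
`ω(x, y) = Q x ⬝ᵥ F *ᵥ P y` is alternating for `F = fund P Q`.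

Conversely, let `b` be a basis of the source whose first two vectors span the centers of `P` and
`Q`. If `ω` is alternating, then both centers lie in its radical, so `ω` is determined by the single
value `ω(b 3, b 2)`, and `F` by `ω` because `P` and `Q` have right inverses. For `F = fund P Q`
that value is nonzero by the vanishing criterion.
-/

open Matrix

section CommRing

variable {R : Type*} [CommRing R]

/-- The block matrix `[P u 0; Q 0 v]`, whose kernel consists of the `(x, s, t)` with
`P x + s u = 0` and `Q x + t v = 0`, i.e. of the space points seen by `P` along `u` and by `Q`
along `v`. -/
def correspondenceMatrix (P Q : Matrix (Fin 3) (Fin 4) R) (u v : Fin 3 → R) :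
    Matrix (Fin 6) (Fin 6) R :=
  !![P 0 0, P 0 1, P 0 2, P 0 3, u 0, 0;
     P 1 0, P 1 1, P 1 2, P 1 3, u 1, 0;
     P 2 0, P 2 1, P 2 2, P 2 3, u 2, 0;
     Q 0 0, Q 0 1, Q 0 2, Q 0 3, 0, v 0;
     Q 1 0, Q 1 1, Q 1 2, Q 1 3, 0, v 1;
     Q 2 0, Q 2 1, Q 2 2, Q 2 3, 0, v 2]

lemma correspondenceMatrix_mulVec_eq_zero_iff (P Q : Matrix (Fin 3) (Fin 4) R)
    (u v : Fin 3 → R) (x : Fin 4 → R) (s t : R) :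
    correspondenceMatrix P Q u v *ᵥ ![x 0, x 1, x 2, x 3, s, t] = 0 ↔
      P *ᵥ x + s • u = 0 ∧ Q *ᵥ x + t • v = 0 := by
  simp [correspondenceMatrix, funext_iff, Fin.forall_fin_succ, mulVec, dotProduct,
    Fin.sum_univ_succ, add_assoc, mul_comm, and_assoc]

lemma fund_apply_eq_det_submatrix (P Q : Matrix (Fin 3) (Fin 4) R) (u v : Fin 3 → R)
    (h k : Fin 3) :
    fund P Q h k = (-1) ^ ((h : ℕ) + (k : ℕ)) *
      (((correspondenceMatrix P Q u v).submatrix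
        (Fin.natAdd 3 h).succAbove (Fin.succAbove 5)).submatrix
          (Fin.castAdd 2 k).succAbove (Fin.succAbove 4)).det := by
  rw [fund, of_apply]
  congr 2
  ext r c
  fin_cases h <;> fin_cases k <;> fin_cases r <;> fin_cases c <;> rfl

lemma det_submatrix_correspondenceMatrix (P Q : Matrix (Fin 3) (Fin 4) R) (u v : Fin 3 → R)
    (h : Fin 3) :
    ((correspondenceMatrix P Q u v).submatrix
      (Fin.natAdd 3 h).succAbove (Fin.succAbove 5)).det = (-1) ^ (h : ℕ) * (fund P Q *ᵥ u) h := by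
  set N := (correspondenceMatrix P Q u v).submatrix (Fin.natAdd 3 h).succAbove (Fin.succAbove 5)
  have top (k : Fin 3) : N (Fin.castAdd 2 k) 4 = u k := by fin_cases h <;> fin_cases k <;> rfl
  have bottom (j : Fin 2) : N (Fin.natAdd 3 j) 4 = 0 := by fin_cases h <;> fin_cases j <;> rfl
  have sign (k : Fin 3) : (-1 : R) ^ ((Fin.castAdd 2 k : ℕ) + ((4 : Fin 5) : ℕ)) =
      (-1) ^ (h : ℕ) * (-1) ^ ((h : ℕ) + (k : ℕ)) := by
    fin_cases h <;> fin_cases k <;> norm_num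
  rw [det_succ_column N 4, Fin.sum_univ_add (a := 3) (b := 2)]
  simp only [top, bottom, sign, mul_zero, zero_mul, Finset.sum_const_zero, add_zero, mulVec,
    dotProduct, Finset.mul_sum, fund_apply_eq_det_submatrix P Q u v]
  exact Finset.sum_congr rfl fun k _ => by ring

lemma det_correspondenceMatrix (P Q : Matrix (Fin 3) (Fin 4) R) (u v : Fin 3 → R) :
    (correspondenceMatrix P Q u v).det = v ⬝ᵥ fund P Q *ᵥ u := by
  set M := correspondenceMatrix P Q u v with hM
  have top (k : Fin 3) : M (Fin.castAdd 3 k) 5 = 0 := by fin_cases k <;> rfl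
  have bottom (h : Fin 3) : M (Fin.natAdd 3 h) 5 = v h := by fin_cases h <;> rfl
  have sign (h : Fin 3) :
      (-1 : R) ^ ((Fin.natAdd 3 h : ℕ) + ((5 : Fin 6) : ℕ)) * (-1) ^ (h : ℕ) = 1 := by
    fin_cases h <;> norm_num
  rw [det_succ_column M 5, Fin.sum_univ_add (a := 3) (b := 3)]
  simp only [top, bottom, mul_zero, zero_mul, Finset.sum_const_zero, zero_add, dotProduct]
  refine Finset.sum_congr rfl fun h _ => ?_
  rw [hM, det_submatrix_correspondenceMatrix]
  linear_combination (v h * (fund P Q *ᵥ u) h) * sign h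

lemma dotProduct_fund_mulVec_eq_zero_iff [IsDomain R] (P Q : Matrix (Fin 3) (Fin 4) R)
    (u v : Fin 3 → R) :
    v ⬝ᵥ fund P Q *ᵥ u = 0 ↔
      ∃ (x : Fin 4 → R) (s t : R), (x ≠ 0 ∨ s ≠ 0 ∨ t ≠ 0) ∧ P *ᵥ x = s • u ∧ Q *ᵥ x = t • v := by
  rw [← det_correspondenceMatrix, ← exists_mulVec_eq_zero_iff]
  constructor
  · rintro ⟨w, hw, hker⟩
    have hw_eq : w = ![w 0, w 1, w 2, w 3, w 4, w 5] := by ext i; fin_cases i <;> rfl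
    rw [hw_eq] at hker
    obtain ⟨hP, hQ⟩ := (correspondenceMatrix_mulVec_eq_zero_iff P Q u v
      ![w 0, w 1, w 2, w 3] (w 4) (w 5)).mp hker
    refine ⟨![w 0, w 1, w 2, w 3], -w 4, -w 5, ?_, ?_, ?_⟩
    · contrapose! hw
      simpa [funext_iff, Fin.forall_fin_succ, and_assoc] using hw
    · rw [neg_smul, eq_neg_of_add_eq_zero_left hP]
    · rw [neg_smul, eq_neg_of_add_eq_zero_left hQ]
  · rintro ⟨x, s, t, hne, hP, hQ⟩
    refine ⟨![x 0, x 1, x 2, x 3, -s, -t], ?_, ?_⟩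
    · contrapose! hne
      simpa [funext_iff, Fin.forall_fin_succ, and_assoc] using hne
    · simp [correspondenceMatrix_mulVec_eq_zero_iff, hP, hQ]

lemma toBilin'_transpose_mul_mul_apply {m n : Type*} [Fintype m] [Fintype n] [DecidableEq n]
    (F : Matrix m m R) (P Q : Matrix m n R) (x y : n → R) :
    toBilin' (Qᵀ * F * P) x y = (Q *ᵥ x) ⬝ᵥ F *ᵥ (P *ᵥ y) := by
  simp only [toBilin'_apply', ← mulVec_mulVec, dotProduct_mulVec, vecMul_transpose]

lemma isAlt_toBilin'_fund (P Q : Matrix (Fin 3) (Fin 4) R) :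
    (toBilin' (Qᵀ * fund P Q * P)).IsAlt := fun x => by
  set M := correspondenceMatrix P Q (P *ᵥ x) (Q *ᵥ x) with hM
  have hker : M *ᵥ ![x 0, x 1, x 2, x 3, -1, -1] = 0 := by
    simp [hM, correspondenceMatrix_mulVec_eq_zero_iff]
  have hdet : M.det • ![x 0, x 1, x 2, x 3, -1, -1] = 0 := by
    rw [← one_mulVec (M.det • _), mulVec_smul, ← smul_mulVec, ← adjugate_mul, ← mulVec_mulVec,
      hker, mulVec_zero]
  rw [toBilin'_transpose_mul_mul_apply, ← det_correspondenceMatrix]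
  simpa using congrFun hdet 5

lemma isAlt_toBilin'_iff [NoZeroDivisors R] [NeZero (2 : R)] {n : Type*} [Fintype n]
    [DecidableEq n] {M : Matrix n n R} : (toBilin' M).IsAlt ↔ M + Mᵀ = 0 := by
  refine ⟨fun h => ?_, fun h x => ?_⟩
  · ext i j
    simpa [add_eq_zero_iff_neg_eq] using h.neg_eq (Pi.single i 1) (Pi.single j 1)
  · have hsum : x ⬝ᵥ (M + Mᵀ) *ᵥ x = 2 * (x ⬝ᵥ M *ᵥ x) := by
      rw [add_mulVec, dotProduct_add, mulVec_transpose, dotProduct_comm x (x ᵥ* M),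
        ← dotProduct_mulVec, two_mul]
    rw [h, zero_mulVec, dotProduct_zero, zero_eq_mul] at hsum
    rw [toBilin'_apply']
    exact hsum.resolve_left two_ne_zero

lemma bilinForm_eq_zero_of_isAlt {M : Type*} [AddCommGroup M] [Module R M]
    {B : LinearMap.BilinForm R M} (hB : B.IsAlt) (b : Module.Basis (Fin 4) R M)
    (h0 : ∀ x, B x (b 0) = 0) (h1 : ∀ x, B (b 1) x = 0) (h32 : B (b 3) (b 2) = 0) : B = 0 := by
  have h0' (x : M) : B (b 0) x = 0 := hB.eq_iff.mp (h0 x)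
  have h1' (x : M) : B x (b 1) = 0 := hB.eq_iff.mp (h1 x)
  have h23 : B (b 2) (b 3) = 0 := hB.eq_iff.mp h32
  refine LinearMap.ext_basis b b fun i j => ?_
  fin_cases i <;> fin_cases j <;> simp [h0, h1, h0', h1', h32, h23, hB.self_eq_zero]

end CommRing

section Field

variable {K : Type*} [Field K]

lemma exists_basis_span_singleton_eq {V : Type*} [AddCommGroup V] [Module K V]
    (hV : Module.finrank K V = 4) {S T : Submodule K V} (hS : IsAtom S) (hT : IsAtom T)
    (hST : S ≠ T) :
    ∃ b : Module.Basis (Fin 4) K V, S = K ∙ b 0 ∧ T = K ∙ b 1 := by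
  obtain ⟨p, hp, rfl⟩ := (atom_iff_nonzero_span S).mp hS
  obtain ⟨q, hq, rfl⟩ := (atom_iff_nonzero_span T).mp hT
  have hpq : LinearIndependent K ![p, q] := by
    refine (LinearIndependent.pair_iff' hp).mpr ?_
    rintro a rfl
    exact hST (Submodule.span_singleton_smul_eq (left_ne_zero_of_smul hq).isUnit p).symm
  obtain ⟨c, hc⟩ := exists_linearIndependent_snoc_of_lt_finrank hpq (by simp [hV])
  obtain ⟨d, hd⟩ := exists_linearIndependent_snoc_of_lt_finrank hc (by simp [hV])
  refine ⟨basisOfLinearIndependentOfCardEqFinrank hd (by simp [hV]), ?_, ?_⟩ <;>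
    rw [coe_basisOfLinearIndependentOfCardEqFinrank] <;> rfl

lemma repr_eq_zero_of_mem_span_singleton {ι V : Type*} [AddCommGroup V] [Module K V]
    (b : Module.Basis ι K V) {i j : ι} (hij : j ≠ i) {x : V} (hx : x ∈ K ∙ b i) :
    b.repr x j = 0 := by
  obtain ⟨a, rfl⟩ := Submodule.mem_span_singleton.mp hx
  simp [hij]

lemma exists_mul_eq_one_of_rank_eq_card {m n : Type*} [Fintype m] [DecidableEq m] [Fintype n]
    {P : Matrix m n K} (hP : P.rank = Fintype.card m) : ∃ P' : Matrix n m K, P * P' = 1 := by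
  classical
  rw [← mulVec_surjective_iff_exists_right_inverse, ← coe_mulVecLin, ← LinearMap.range_eq_top]
  exact Submodule.eq_top_of_finrank_eq (hP.trans (Module.finrank_fintype_fun_eq_card K).symm)

lemma isAtom_ker_mulVecLin {m n : Type*} [Finite m] [Fintype n] {P : Matrix m n K}
    (hP : P.rank + 1 = Fintype.card n) : IsAtom (LinearMap.ker P.mulVecLin) := by
  have hker : P.rank + Module.finrank K (LinearMap.ker P.mulVecLin) = Fintype.card n := by
    rw [Matrix.rank, LinearMap.finrank_range_add_finrank_ker, Module.finrank_fintype_fun_eq_card]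
  rw [Submodule.isAtom_iff_finrank_eq_one]
  omega

lemma eq_zero_of_toBilin'_basis_eq_zero {m n : Type*} [Fintype m] [Fintype n] [DecidableEq n]
    {P Q : Matrix m n K} (hP : P.rank = Fintype.card m) (hQ : Q.rank = Fintype.card m)
    {b : Module.Basis (Fin 4) K (n → K)} (hb0 : P *ᵥ b 0 = 0) (hb1 : Q *ᵥ b 1 = 0)
    {F : Matrix m m K} (hF : (toBilin' (Qᵀ * F * P)).IsAlt)
    (h32 : toBilin' (Qᵀ * F * P) (b 3) (b 2) = 0) : F = 0 := by
  classical
  obtain ⟨P', hP'⟩ := exists_mul_eq_one_of_rank_eq_card hP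
  obtain ⟨Q', hQ'⟩ := exists_mul_eq_one_of_rank_eq_card hQ
  have hform : Qᵀ * F * P = 0 := by
    refine toBilin'.map_eq_zero_iff.mp (bilinForm_eq_zero_of_isAlt hF b ?_ ?_ h32) <;>
      simp [toBilin'_transpose_mul_mul_apply, hb0, hb1]
  calc F = (Q * Q')ᵀ * F * (P * P') := by simp [hP', hQ']
    _ = Q'ᵀ * (Qᵀ * F * P) * P' := by simp only [transpose_mul, Matrix.mul_assoc]
    _ = 0 := by simp [hform]

variable {P Q : Matrix (Fin 3) (Fin 4) K}

lemma toBilin'_fund_basis_ne_zero {b : Module.Basis (Fin 4) K (Fin 4 → K)}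
    (hP : LinearMap.ker P.mulVecLin = K ∙ b 0) (hQ : LinearMap.ker Q.mulVecLin = K ∙ b 1) :
    toBilin' (Qᵀ * fund P Q * P) (b 3) (b 2) ≠ 0 := by
  rw [toBilin'_transpose_mul_mul_apply, Ne, dotProduct_fund_mulVec_eq_zero_iff]
  rintro ⟨x, s, t, hne, hs, ht⟩
  have hPx : x - s • b 2 ∈ K ∙ b 0 := by
    simp [← hP, mulVec_sub, mulVec_smul, hs]
  have hQx : x - t • b 3 ∈ K ∙ b 1 := by
    simp [← hQ, mulVec_sub, mulVec_smul, ht]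
  have coordP {j : Fin 4} (hj : j ≠ 0) := repr_eq_zero_of_mem_span_singleton b hj hPx
  have coordQ {j : Fin 4} (hj : j ≠ 1) := repr_eq_zero_of_mem_span_singleton b hj hQx
  have h0 : b.repr x 0 = 0 := by simpa using coordQ (j := 0) (by decide)
  have h1 : b.repr x 1 = 0 := by simpa using coordP (j := 1) (by decide)
  have h2 : b.repr x 2 = 0 := by simpa using coordQ (j := 2) (by decide)
  have h3 : b.repr x 3 = 0 := by simpa using coordP (j := 3) (by decide)
  have hs0 : s = 0 := by simpa [h2] using coordP (j := 2) (by decide)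
  have ht0 : t = 0 := by simpa [h3] using coordQ (j := 3) (by decide)
  have hx : x = 0 := b.ext_elem fun i => by fin_cases i <;> simp [h0, h1, h2, h3]
  simp [hx, hs0, ht0] at hne

lemma fund_ne_zero (hP : P.rank = 3) (hQ : Q.rank = 3)
    (hPQ : LinearMap.ker P.mulVecLin ≠ LinearMap.ker Q.mulVecLin) : fund P Q ≠ 0 := by
  obtain ⟨b, hb0, hb1⟩ := exists_basis_span_singleton_eq (Module.finrank_fin_fun K)
    (isAtom_ker_mulVecLin (by simp [hP])) (isAtom_ker_mulVecLin (by simp [hQ])) hPQ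
  intro h
  exact toBilin'_fund_basis_ne_zero hb0 hb1 (by simp [h])

theorem isAlt_toBilin'_iff_exists_smul_fund (hP : P.rank = 3) (hQ : Q.rank = 3)
    (hPQ : LinearMap.ker P.mulVecLin ≠ LinearMap.ker Q.mulVecLin)
    (F : Matrix (Fin 3) (Fin 3) K) :
    (toBilin' (Qᵀ * F * P)).IsAlt ↔ ∃ l : K, F = l • fund P Q := by
  have form_smul (l : K) :
      toBilin' (Qᵀ * (l • fund P Q) * P) = l • toBilin' (Qᵀ * fund P Q * P) := by
    rw [Matrix.mul_smul, Matrix.smul_mul, map_smul]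
  constructor
  · intro hF
    obtain ⟨b, hb0, hb1⟩ := exists_basis_span_singleton_eq (Module.finrank_fin_fun K)
      (isAtom_ker_mulVecLin (by simp [hP])) (isAtom_ker_mulVecLin (by simp [hQ])) hPQ
    have hPb : P *ᵥ b 0 = 0 :=
      LinearMap.mem_ker.mp (hb0.ge (Submodule.mem_span_singleton_self _))
    have hQb : Q *ᵥ b 1 = 0 :=
      LinearMap.mem_ker.mp (hb1.ge (Submodule.mem_span_singleton_self _))
    have hfund := toBilin'_fund_basis_ne_zero hb0 hb1
    let l := toBilin' (Qᵀ * F * P) (b 3) (b 2) / toBilin' (Qᵀ * fund P Q * P) (b 3) (b 2)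
    have hsub : toBilin' (Qᵀ * (F - l • fund P Q) * P) =
        toBilin' (Qᵀ * F * P) - l • toBilin' (Qᵀ * fund P Q * P) := by
      rw [Matrix.mul_sub, Matrix.sub_mul, map_sub, form_smul]
    refine ⟨l, sub_eq_zero.mp (eq_zero_of_toBilin'_basis_eq_zero hP hQ hPb hQb ?_ ?_)⟩
    · rw [hsub]
      exact hF.sub ((isAlt_toBilin'_fund P Q).smul l)
    · rw [hsub, LinearMap.sub_apply, LinearMap.sub_apply, LinearMap.smul_apply,
        LinearMap.smul_apply, smul_eq_mul, div_mul_cancel₀ _ hfund, sub_self]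
  · rintro ⟨l, rfl⟩
    rw [form_smul]
    exact (isAlt_toBilin'_fund P Q).smul l

end Field

theorem skew_iff_scalar_multiple_of_fund_general {K : Type*} [Field K] [NeZero (2 : K)]
    (P Q : Matrix (Fin 3) (Fin 4) K) (hP : P.rank = 3) (hQ : Q.rank = 3)
    (hPQ : LinearMap.ker P.mulVecLin ≠ LinearMap.ker Q.mulVecLin)
    (F : Matrix (Fin 3) (Fin 3) K) :
    (F ≠ 0 ∧ Qᵀ * F * P + Pᵀ * Fᵀ * Q = 0) ↔ ∃ l : K, l ≠ 0 ∧ F = l • fund P Q := by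
  have htranspose : (Qᵀ * F * P)ᵀ = Pᵀ * Fᵀ * Q := by
    simp only [transpose_mul, transpose_transpose, Matrix.mul_assoc]
  rw [← htranspose, ← isAlt_toBilin'_iff, isAlt_toBilin'_iff_exists_smul_fund hP hQ hPQ]
  constructor
  · rintro ⟨hF, l, rfl⟩
    exact ⟨l, left_ne_zero_of_smul hF, rfl⟩
  · rintro ⟨l, hl, rfl⟩
    exact ⟨smul_ne_zero hl (fund_ne_zero hP hQ hPQ), l, rfl⟩

/-- for cameras `Pi`, `Pj` (rank-3) with distinct centers, a `3 × 3`
matrix `F` is nonzero and makes `Pjᵀ F Pi` skew-symmetric if and only if `F` is a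
nonzero scalar multiple of the fundamental matrix `𝓕(Pi, Pj)`. -/
theorem skew_iff_scalar_multiple_of_fund (Pi Pj : Matrix (Fin 3) (Fin 4) ℝ)
    (hi : Pi.rank = 3) (hj : Pj.rank = 3)
    (hc : LinearMap.ker Pi.mulVecLin ≠ LinearMap.ker Pj.mulVecLin)
    (F : Matrix (Fin 3) (Fin 3) ℝ) :
    (F ≠ 0 ∧ Pjᵀ * F * Pi + Piᵀ * Fᵀ * Pj = 0) ↔
      ∃ l : ℝ, l ≠ 0 ∧ F = l • fund Pi Pj :=
  skew_iff_scalar_multiple_of_fund_general Pi Pj hi hj hc F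
end

section
/- For all real 3×4 matrices P_i and P_j, every real 4×4 matrix H, and all real scalars λ and μ, one has 𝓕(λ·P_i·H, μ·P_j·H) = λ²·μ²·det(H) · 𝓕(P_i, P_j). In particular, two camera pairs related by a common invertible 4×4 transformation and individual nonzero rescalings of the cameras (i.e., projectively equivalent pairs) have proportional fundamental matrices. -/
open Matrix

/-!
Each entry of the fundamental matrix is, up to sign, the determinant of two rows of `P` stacked on
two rows of `Q`. Passing to `P * H` and `Q * H` multiplies this stacked matrix on the right by `H`,
and rescaling the cameras by `a` and `b` scales two of its rows by `a` and the other two by `b`.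
-/

theorem mul_submatrix_id_right {k l m n R : Type*} [Fintype m] [Mul R] [AddCommMonoid R]
    (A : Matrix l m R) (B : Matrix m n R) (f : k → l) :
    (A * B).submatrix f id = A.submatrix f id * B :=
  rfl

section FromRows

variable {m₁ m₂ n R : Type*} [Fintype n] [DecidableEq n] [CommRing R]

theorem det_submatrix_fromRows_mul (e : n → m₁ ⊕ m₂) (A : Matrix m₁ n R) (B : Matrix m₂ n R)
    (C : Matrix n n R) :
    ((fromRows (A * C) (B * C)).submatrix e id).det =
      ((fromRows A B).submatrix e id).det * C.det := by
  rw [← fromRows_mul, mul_submatrix_id_right, det_mul]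

theorem det_submatrix_fromRows_smul [Fintype m₁] [Fintype m₂] (e : n ≃ m₁ ⊕ m₂) (a b : R)
    (A : Matrix m₁ n R) (B : Matrix m₂ n R) :
    ((fromRows (a • A) (b • B)).submatrix e id).det =
      a ^ Fintype.card m₁ * b ^ Fintype.card m₂ * ((fromRows A B).submatrix e id).det := by
  let rowScale : m₁ ⊕ m₂ → R := Sum.elim (fun _ => a) (fun _ => b)
  have scaled_rows : (fromRows (a • A) (b • B)).submatrix e id =
      of fun i j => rowScale (e i) * (fromRows A B).submatrix e id i j := by
    ext i j
    cases h : e i <;> simp [rowScale, h]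
  have prod_rowScale : ∏ i, rowScale (e i) = a ^ Fintype.card m₁ * b ^ Fintype.card m₂ := by
    simp [e.prod_comp rowScale, Fintype.prod_sum_type, rowScale]
  rw [scaled_rows, det_mul_column, prod_rowScale]

end FromRows

section Fund

variable {K : Type*} [CommRing K] (P Q : Matrix (Fin 3) (Fin 4) K)

theorem fund_apply_s9 (h k : Fin 3) :
    fund P Q h k = (-1) ^ ((h : ℕ) + (k : ℕ)) *
      ((fromRows (P.submatrix k.succAbove id) (Q.submatrix h.succAbove id)).submatrix
        (finSumFinEquiv (m := 2) (n := 2)).symm id).det := by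
  rw [fund, of_apply]
  congr 2
  ext r c
  fin_cases r <;> rfl

theorem fund_mul_right (H : Matrix (Fin 4) (Fin 4) K) :
    fund (P * H) (Q * H) = H.det • fund P Q := by
  ext h k
  rw [Matrix.smul_apply, smul_eq_mul, fund_apply_s9, fund_apply_s9, mul_submatrix_id_right,
    mul_submatrix_id_right, det_submatrix_fromRows_mul]
  ring

theorem fund_smul_smul (a b : K) : fund (a • P) (b • Q) = (a ^ 2 * b ^ 2) • fund P Q := by
  ext h k
  simp only [Matrix.smul_apply, smul_eq_mul, fund_apply_s9, submatrix_smul, Pi.smul_apply,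
    det_submatrix_fromRows_smul, Fintype.card_fin]
  ring

theorem fund_proj_equivariant_general (H : Matrix (Fin 4) (Fin 4) K) (a b : K) :
    fund (a • (P * H)) (b • (Q * H)) = (a ^ 2 * b ^ 2 * H.det) • fund P Q := by
  rw [fund_smul_smul, fund_mul_right, smul_smul]

end Fund

/-- equivariance of the fundamental matrix under a common `4 × 4`
transformation `H` and individual rescalings of the cameras:
`𝓕(λ·Pᵢ·H, μ·Pⱼ·H) = λ²·μ²·det H · 𝓕(Pᵢ, Pⱼ)`. -/
theorem fund_proj_equivariant (Pi Pj : Matrix (Fin 3) (Fin 4) ℝ)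
    (H : Matrix (Fin 4) (Fin 4) ℝ) (l m : ℝ) :
    fund (l • (Pi * H)) (m • (Pj * H)) = (l ^ 2 * m ^ 2 * H.det) • fund Pi Pj :=
  fund_proj_equivariant_general Pi Pj H l m
end
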